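/- Let V ⊆ V' be an immediate extension of valuation rings. Then V' is a filtered union of its V-subalgebras that are complete intersection V-algebras of finite type; that is, the set of such subalgebras is nonempty, directed under inclusion, and its union is all of V'. -/

import Mathlib

/-- An extension `V ⊆ V'` of valuation rings (given by an injective algebra structure)
is *immediate* if it is local, the induced map of residue fields is an isomorphism,
and the induced map of value groups is an isomorphism. -/
def IsImmediateExtension (V V' : Type*) [CommRing V] [IsLocalRing V]
    [CommRing V'] [IsLocalRing V'] [Algebra V V'] : Prop :=
  Function.Injective (algebraMap V V') ∧
  (∀ a : V, algebraMap V V' a ∈ IsLocalRing.maximalIdeal V' ↔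
    a ∈ IsLocalRing.maximalIdeal V) ∧
  (∀ x : V', ∃ a : V, x - algebraMap V V' a ∈ IsLocalRing.maximalIdeal V') ∧
  (∀ x : V', x ≠ 0 → ∃ a b : V, a ≠ 0 ∧ b ≠ 0 ∧
    Associated (algebraMap V V' a) (x * algebraMap V V' b))


/-- A commutative ring `S` is a *filtered union* of those of its `R`-subalgebras
satisfying the class (predicate) `C` if the collection of subalgebras satisfying `C`
is nonempty, directed under inclusion, and its union is all of `S`. -/
def Subalgebra.IsFilteredUnion {R S : Type*} [CommSemiring R] [CommSemiring S]
    [Algebra R S] (C : Subalgebra R S → Prop) : Prop :=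
  (∃ A, C A) ∧ DirectedOn (· ≤ ·) {A | C A} ∧ ∀ s : S, ∃ A, C A ∧ s ∈ A

/-- An `R`-algebra `A` is a *complete intersection `R`-algebra of finite type* if it is
isomorphic to `R[Y₁, …, Y_N]/(f₁, …, f_r)` for a regular sequence `f₁, …, f_r` of the
polynomial ring `R[Y₁, …, Y_N]`. -/
def Algebra.IsCompleteIntersectionOfFiniteType (R A : Type*) [CommRing R] [CommRing A]
    [Algebra R A] : Prop :=
  ∃ (N r : ℕ) (f : Fin r → MvPolynomial (Fin N) R),
    RingTheory.Sequence.IsRegular (MvPolynomial (Fin N) R) (List.ofFn f) ∧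
    Nonempty ((MvPolynomial (Fin N) R ⧸ Ideal.span (Set.range f)) ≃ₐ[R] A)

/-!
Finitely many elements of `V'` lie in a finitely generated subextension of `Frac V' / Frac V`, which
is climbed by simple extensions. At each stage, immediateness and expansions along monic polynomials
of minimal degree show that the elements are captured by finitely many `φ i ∈ 𝔪_{V'}`, some of which
satisfy a relation `h i` that is a unit times a power of the variable `i` modulo `𝔪_V`.

Locally at the origin of the closed fibre, relations of this shape form a regular sequence with
`V`-torsion-free quotient, by the fibre criterion after descent to a noetherian subring. As they
generate all relations over `Frac V`, they generate all relations up to denominators that are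
units at the origin. Saturated ideals over a valuation ring are finitely generated, so that a single
denominator suffices, and inverting it by one more variable gives a complete intersection.
-/

open IsLocalRing MvPolynomial

section ColonFlat

variable {R Q : Type*} [CommRing R] [CommRing Q] [Algebra R Q]

/-- Flatness of `Q ⧸ H` over `R`, in the elementwise form `(J Q + H : x) = (J : x) Q + H` for
all ideals `J` and elements `x` of `R`. -/
def IsColonFlat (R : Type*) {Q : Type*} [CommRing R] [CommRing Q] [Algebra R Q]
    (H : Ideal Q) : Prop :=
  ∀ (J : Ideal R) (x : R) (z : Q), algebraMap R Q x * z ∈ J.map (algebraMap R Q) ⊔ H →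
    z ∈ (J.colon {x}).map (algebraMap R Q) ⊔ H

theorem mem_of_forall_mem_sup_span_pow [IsNoetherianRing Q] [IsLocalRing Q] (I : Ideal Q)
    {y z : Q} (hy : y ∈ maximalIdeal Q) (h : ∀ e : ℕ, z ∈ I ⊔ Ideal.span {y ^ e}) : z ∈ I := by
  have hz : Ideal.Quotient.mk I z ∈ ⨅ e : ℕ, maximalIdeal Q ^ e • (⊤ : Submodule Q (Q ⧸ I)) := by
    rw [Submodule.mem_iInf]
    intro e
    obtain ⟨c, a, ha, rfl⟩ := Ideal.mem_span_singleton_sup.mp (sup_comm I _ ▸ h e)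
    have hmk : Ideal.Quotient.mk I (c * y ^ e + a) = y ^ e • Ideal.Quotient.mk I c := by
      rw [map_add, Ideal.Quotient.eq_zero_iff_mem.mpr ha, add_zero, mul_comm]
      rfl
    rw [hmk]
    exact Submodule.smul_mem_smul (Ideal.pow_mem_pow hy e) trivial
  rw [Ideal.iInf_pow_smul_eq_bot_of_isLocalRing _ Ideal.IsPrime.ne_top', Submodule.mem_bot] at hz
  exact Ideal.Quotient.eq_zero_iff_mem.mp hz

theorem exists_notMem_mul_mem_of_pow_mem {J : Ideal R} {x : R} (hx : x ∉ J) {e : ℕ}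
    (he : x ^ e ∈ J) : ∃ y ∉ J, x * y ∈ J := by
  induction e with
  | zero => exact absurd (J.mul_mem_left x he) (by simpa using hx)
  | succ e ih =>
    by_cases h : x ^ e ∈ J
    · exact ih h
    · exact ⟨x ^ e, h, pow_succ' x e ▸ he⟩

theorem map_colon_singleton_mul_le (J : Ideal R) (y : R) :
    (J.colon {y}).map (algebraMap R Q) * Ideal.span {algebraMap R Q y} ≤
      J.map (algebraMap R Q) := by
  rw [← Set.image_singleton, ← Ideal.map_span, ← Ideal.map_mul]
  refine Ideal.map_mono (Ideal.mul_le.mpr fun r hr s hs ↦ ?_)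
  obtain ⟨c, rfl⟩ := Ideal.mem_span_singleton'.mp hs
  rw [mul_left_comm]
  exact J.mul_mem_left c (Submodule.mem_colon_singleton.mp hr)

theorem isSMulRegular_quotient_iff (I : Ideal Q) (g : Q) :
    IsSMulRegular (Q ⧸ I) g ↔ ∀ z, g * z ∈ I → z ∈ I :=
  isSMulRegular_quotient_iff_mem_of_smul_mem I g

theorem map_sup_span_singleton_sup (J : Ideal R) (H : Ideal Q) (x : R) :
    (J ⊔ Ideal.span {x}).map (algebraMap R Q) ⊔ H =
      Ideal.span {algebraMap R Q x} ⊔ (J.map (algebraMap R Q) ⊔ H) := by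
  rw [Ideal.map_sup, Ideal.map_span, Set.image_singleton, sup_comm (J.map _), sup_assoc]

namespace IsColonFlat

variable {H : Ideal Q} {g : Q}

theorem isSMulRegular_of_mul_mem (hH : IsColonFlat R H) {J : Ideal R} {x y : R} (hx : x ∉ J)
    (hy : y ∉ J) (hxy : x * y ∈ J)
    (hg : ∀ J', J < J' → IsSMulRegular (Q ⧸ J'.map (algebraMap R Q) ⊔ H) g) :
    IsSMulRegular (Q ⧸ J.map (algebraMap R Q) ⊔ H) g := by
  rw [isSMulRegular_quotient_iff]
  intro z hz
  have hJy : J < J ⊔ Ideal.span {y} := Submodule.lt_sup_iff_notMem.mpr hy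
  have hzy : z ∈ (J ⊔ Ideal.span {y}).map (algebraMap R Q) ⊔ H :=
    (isSMulRegular_quotient_iff _ _).mp (hg _ hJy) z
      (sup_le_sup_right (Ideal.map_mono le_sup_left) H hz)
  rw [map_sup_span_singleton_sup] at hzy
  obtain ⟨c, a, ha, rfl⟩ := Ideal.mem_span_singleton_sup.mp hzy
  have hgc : g * c ∈ (J.colon {y}).map (algebraMap R Q) ⊔ H := by
    refine hH J y _ ?_
    have : algebraMap R Q y * (g * c) = g * (c * algebraMap R Q y + a) - g * a := by ring
    exact this ▸ sub_mem hz (Ideal.mul_mem_left _ g ha)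
  have hJcolon : J < J.colon {y} :=
    SetLike.lt_iff_le_and_exists.mpr ⟨fun r hr ↦ Submodule.mem_colon_singleton.mpr
      (J.mul_mem_right y hr), x, Submodule.mem_colon_singleton.mpr hxy, hx⟩
  obtain ⟨p, hp, q, hq, rfl⟩ := Submodule.mem_sup.mp
    ((isSMulRegular_quotient_iff _ _).mp (hg _ hJcolon) c hgc)
  rw [add_mul]
  refine add_mem (add_mem (Ideal.mem_sup_left ?_) ?_) ha
  · exact map_colon_singleton_mul_le J y
      (Ideal.mul_mem_mul hp (Ideal.mem_span_singleton_self _))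
  · exact Ideal.mem_sup_right (Ideal.mul_mem_right _ _ hq)

/-- Noetherian induction on `J`: unless `𝔫 ≤ J`, some `x ∈ 𝔫 \ J` is either nilpotent modulo `J`,
where colon-flatness applies, or has all its powers outside `J`, where Krull's intersection
theorem applies. -/
theorem isSMulRegular [IsNoetherianRing R] [IsNoetherianRing Q] [IsLocalRing Q]
    (hH : IsColonFlat R H) (𝔫 : Ideal R) (h𝔫 : 𝔫.map (algebraMap R Q) ≤ maximalIdeal Q)
    (hg : ∀ J, 𝔫 ≤ J → IsSMulRegular (Q ⧸ J.map (algebraMap R Q) ⊔ H) g) (J : Ideal R) :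
    IsSMulRegular (Q ⧸ J.map (algebraMap R Q) ⊔ H) g := by
  induction J using IsNoetherian.induction with
  | hgt J ih =>
  by_cases h𝔫J : 𝔫 ≤ J
  · exact hg J h𝔫J
  obtain ⟨x, hx𝔫, hxJ⟩ := SetLike.not_le_iff_exists.mp h𝔫J
  by_cases hpow : ∃ e, x ^ e ∈ J
  · obtain ⟨e, he⟩ := hpow
    obtain ⟨y, hyJ, hxy⟩ := exists_notMem_mul_mem_of_pow_mem hxJ he
    exact hH.isSMulRegular_of_mul_mem hxJ hyJ hxy ih
  · push Not at hpow
    rw [isSMulRegular_quotient_iff]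
    intro z hz
    refine mem_of_forall_mem_sup_span_pow _ (h𝔫 (Ideal.mem_map_of_mem _ hx𝔫)) fun e ↦ ?_
    rw [← map_pow, sup_comm, ← map_sup_span_singleton_sup]
    exact (isSMulRegular_quotient_iff _ _).mp (ih _ (Submodule.lt_sup_iff_notMem.mpr (hpow e))) z
      (sup_le_sup_right (Ideal.map_mono le_sup_left) H hz)

theorem sup_span_singleton (hH : IsColonFlat R H)
    (hg : ∀ J : Ideal R, IsSMulRegular (Q ⧸ J.map (algebraMap R Q) ⊔ H) g) :
    IsColonFlat R (Ideal.span {g} ⊔ H) := by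
  intro J x z hz
  rw [sup_left_comm] at hz ⊢
  obtain ⟨c, a, ha, hz⟩ := Ideal.mem_span_singleton_sup.mp hz
  have hc : c ∈ (J ⊔ Ideal.span {x}).map (algebraMap R Q) ⊔ H := by
    refine (isSMulRegular_quotient_iff _ _).mp (hg _) c ?_
    rw [map_sup_span_singleton_sup, Ideal.mem_span_singleton_sup]
    exact ⟨z, -a, neg_mem ha, by linear_combination -hz⟩
  rw [map_sup_span_singleton_sup] at hc
  obtain ⟨c', p, hp, rfl⟩ := Ideal.mem_span_singleton_sup.mp hc
  refine Ideal.mem_span_singleton_sup.mpr ⟨c', z - c' * g, hH J x _ ?_, by ring⟩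
  have : algebraMap R Q x * (z - c' * g) = g * p + a := by linear_combination -hz
  exact this ▸ add_mem (Ideal.mul_mem_left _ g hp) ha

end IsColonFlat

end ColonFlat

section OriginSaturation

variable {R σ : Type*} [CommRing R]

/-- The saturation of an ideal `I` of a polynomial ring with respect to the polynomials whose
constant coefficient avoids the prime `𝔫`: the polynomials that vanish on the subscheme defined
by `I` near the origin of the fibre over `𝔫`. -/
noncomputable def originSaturation (𝔫 : Ideal R) [𝔫.IsPrime] (I : Ideal (MvPolynomial σ R)) :
    Ideal (MvPolynomial σ R) :=
  (I.map (algebraMap _ (Localization.AtPrime (𝔫.comap (constantCoeff (σ := σ)))))).comap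
    (algebraMap _ _)

variable {𝔫 : Ideal R} [𝔫.IsPrime] {I I' : Ideal (MvPolynomial σ R)} {p s : MvPolynomial σ R}

theorem mem_originSaturation_iff :
    p ∈ originSaturation 𝔫 I ↔ ∃ s, constantCoeff s ∉ 𝔫 ∧ s * p ∈ I :=
  IsLocalization.algebraMap_mem_map_algebraMap_iff (𝔫.comap constantCoeff).primeCompl _ I p

theorem le_originSaturation : I ≤ originSaturation 𝔫 I :=
  Ideal.le_comap_map

theorem mem_originSaturation_of_mul_mem (hs : constantCoeff s ∉ 𝔫)
    (h : s * p ∈ originSaturation 𝔫 I) : p ∈ originSaturation 𝔫 I := by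
  obtain ⟨t, ht, hmem⟩ := mem_originSaturation_iff.mp h
  refine mem_originSaturation_iff.mpr ⟨t * s, ?_, by rwa [mul_assoc]⟩
  rw [map_mul]
  exact Ideal.IsPrime.mul_notMem ‹_› ht hs

theorem originSaturation_le_originSaturation (h : I ≤ originSaturation 𝔫 I') :
    originSaturation 𝔫 I ≤ originSaturation 𝔫 I' := fun _ hp ↦ by
  obtain ⟨s, hs, hmem⟩ := mem_originSaturation_iff.mp hp
  exact mem_originSaturation_of_mul_mem hs (h hmem)

theorem originSaturation_mono (h : I ≤ I') : originSaturation 𝔫 I ≤ originSaturation 𝔫 I' :=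
  originSaturation_le_originSaturation (h.trans le_originSaturation)

theorem map_mem_originSaturation {S τ : Type*} [CommRing S] {𝔪 : Ideal S} [𝔪.IsPrime]
    {I' : Ideal (MvPolynomial τ S)} (ψ : MvPolynomial σ R →+* MvPolynomial τ S)
    (hψ : ∀ s, constantCoeff s ∉ 𝔫 → constantCoeff (ψ s) ∉ 𝔪) (hI : I.map ψ ≤ I')
    (hp : p ∈ originSaturation 𝔫 I) : ψ p ∈ originSaturation 𝔪 I' := by
  obtain ⟨s, hs, hsp⟩ := mem_originSaturation_iff.mp hp
  exact mem_originSaturation_iff.mpr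
    ⟨ψ s, hψ s hs, map_mul ψ s p ▸ hI (Ideal.mem_map_of_mem ψ hsp)⟩

end OriginSaturation

section Distinguished

variable {R σ : Type*} [CommRing R]

/-- Modulo `𝔫`, the polynomial `h` is a power of `X i` times a polynomial that does not vanish at
the origin. -/
def IsDistinguished (𝔫 : Ideal R) (i : σ) (h : MvPolynomial σ R) : Prop :=
  ∃ (w : MvPolynomial σ R) (e : ℕ), constantCoeff w ∉ 𝔫 ∧ h - w * X i ^ e ∈ 𝔫.map C

theorem mem_map_C_sup_span_X_pow_iff (J : Ideal R) (T : Set σ) (e : σ → ℕ)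
    (p : MvPolynomial σ R) :
    p ∈ J.map C ⊔ Ideal.span ((fun j ↦ X j ^ e j) '' T) ↔
      ∀ m : σ →₀ ℕ, (∀ j ∈ T, m j < e j) → coeff m p ∈ J := by
  have hX : ((fun j ↦ X j ^ e j) '' T : Set (MvPolynomial σ R)) =
      (fun s ↦ monomial s 1) '' ((fun j ↦ Finsupp.single j (e j)) '' T) := by
    simp only [Set.image_image, X_pow_eq_monomial]
  constructor
  · intro hp m hm
    obtain ⟨a, ha, b, hb, rfl⟩ := Submodule.mem_sup.mp hp
    rw [hX, mem_ideal_span_monomial_image] at hb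
    have hmb : m ∉ b.support := fun h ↦ by
      obtain ⟨_, ⟨j, hj, rfl⟩, hle⟩ := hb m h
      exact (hm j hj).not_ge (Finsupp.single_le_iff.mp hle)
    rw [coeff_add, notMem_support_iff.mp hmb, add_zero]
    exact mem_map_C_iff.mp ha m
  · intro h
    rw [p.as_sum]
    refine Ideal.sum_mem _ fun m _ ↦ ?_
    by_cases hm : ∀ j ∈ T, m j < e j
    · rw [monomial_eq]
      exact Ideal.mem_sup_left (Ideal.mul_mem_right _ _ (Ideal.mem_map_of_mem _ (h m hm)))
    · push Not at hm
      obtain ⟨j, hj, hle⟩ := hm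
      have hfactor : monomial m (coeff m p) =
          monomial (m - Finsupp.single j (e j)) (coeff m p) * X j ^ e j := by
        rw [X_pow_eq_monomial, monomial_mul, mul_one,
          tsub_add_cancel_of_le (Finsupp.single_le_iff.mpr hle)]
      rw [hfactor]
      exact Ideal.mem_sup_right (Ideal.mul_mem_left _ _ (Ideal.subset_span ⟨j, hj, rfl⟩))

theorem mem_map_C_sup_span_X_pow_of_X_pow_mul_mem {J : Ideal R} {T : Set σ} {e : σ → ℕ} {i : σ}
    (hi : i ∉ T) {k : ℕ} {z : MvPolynomial σ R}
    (hz : X i ^ k * z ∈ J.map C ⊔ Ideal.span ((fun j ↦ X j ^ e j) '' T)) :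
    z ∈ J.map C ⊔ Ideal.span ((fun j ↦ X j ^ e j) '' T) := by
  rw [mem_map_C_sup_span_X_pow_iff] at hz ⊢
  intro m hm
  have := hz (Finsupp.single i k + m) fun j hj ↦ by
    simpa [Finsupp.single_eq_of_ne (ne_of_mem_of_not_mem hj hi)] using hm j hj
  rwa [X_pow_eq_monomial, coeff_monomial_mul, one_mul] at this

variable {𝔫 J : Ideal R} [𝔫.IsPrime] {h : σ → MvPolynomial σ R} {T : Set σ} {i : σ}

theorem exists_originSaturation_sup_span_eq (h𝔫J : 𝔫 ≤ J)
    (hT : ∀ j ∈ T, IsDistinguished 𝔫 j (h j)) :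
    ∃ e : σ → ℕ, originSaturation 𝔫 (J.map C ⊔ Ideal.span (h '' T)) =
      originSaturation 𝔫 (J.map C ⊔ Ideal.span ((fun j ↦ X j ^ e j) '' T)) := by
  choose! w e hw hh using hT
  refine ⟨e, le_antisymm ?_ ?_⟩
  · refine originSaturation_le_originSaturation (le_trans ?_ le_originSaturation)
    refine sup_le le_sup_left (Ideal.span_le.mpr ?_)
    rintro _ ⟨j, hj, rfl⟩
    have hsplit : h j = (h j - w j * X j ^ e j) + w j * X j ^ e j := by ring
    rw [SetLike.mem_coe, hsplit]
    exact add_mem (Ideal.mem_sup_left (Ideal.map_mono h𝔫J (hh j hj)))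
      (Ideal.mem_sup_right (Ideal.mul_mem_left _ _ (Ideal.subset_span ⟨j, hj, rfl⟩)))
  · refine originSaturation_le_originSaturation
      (sup_le (le_sup_left.trans le_originSaturation) (Ideal.span_le.mpr ?_))
    rintro _ ⟨j, hj, rfl⟩
    refine mem_originSaturation_of_mul_mem (hw j hj) (le_originSaturation ?_)
    have hsplit : w j * X j ^ e j = h j - (h j - w j * X j ^ e j) := by ring
    rw [hsplit]
    exact sub_mem (Ideal.mem_sup_right (Ideal.subset_span ⟨j, hj, rfl⟩))
      (Ideal.mem_sup_left (Ideal.map_mono h𝔫J (hh j hj)))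

theorem IsDistinguished.mem_originSaturation_map_C_sup_of_mul_mem
    (hhi : IsDistinguished 𝔫 i (h i)) (h𝔫J : 𝔫 ≤ J)
    (hT : ∀ j ∈ T, IsDistinguished 𝔫 j (h j)) (hi : i ∉ T) {z : MvPolynomial σ R}
    (hz : h i * z ∈ originSaturation 𝔫 (J.map C ⊔ Ideal.span (h '' T))) :
    z ∈ originSaturation 𝔫 (J.map C ⊔ Ideal.span (h '' T)) := by
  obtain ⟨e, he⟩ := exists_originSaturation_sup_span_eq h𝔫J hT
  obtain ⟨w, k, hw, hwk⟩ := hhi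
  rw [he] at hz ⊢
  have hwXz : w * (X i ^ k * z) ∈
      originSaturation 𝔫 (J.map C ⊔ Ideal.span ((fun j ↦ X j ^ e j) '' T)) := by
    have hsplit : w * (X i ^ k * z) = h i * z - (h i - w * X i ^ k) * z := by ring
    rw [hsplit]
    exact sub_mem hz (Ideal.mul_mem_right _ _
      (le_originSaturation (Ideal.mem_sup_left (Ideal.map_mono h𝔫J hwk))))
  obtain ⟨s, hs, hsz⟩ := mem_originSaturation_iff.mp (mem_originSaturation_of_mul_mem hw hwXz)
  exact mem_originSaturation_iff.mpr
    ⟨s, hs, mem_map_C_sup_span_X_pow_of_X_pow_mul_mem hi (by rwa [mul_left_comm])⟩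

end Distinguished

section Noetherian

theorem mem_of_algebraMap_mul_mem {A Q : Type*} [CommRing A] [CommRing Q] [Algebra A Q]
    (M : Submonoid A) [IsLocalization M Q] {K K' : Ideal Q} {a : A}
    (h : ∀ p, algebraMap A Q (a * p) ∈ K → algebraMap A Q p ∈ K') {z : Q}
    (hz : algebraMap A Q a * z ∈ K) : z ∈ K' := by
  obtain ⟨⟨p, s⟩, hp⟩ := IsLocalization.surj M z
  rw [← Ideal.mul_unit_mem_iff_mem K' (IsLocalization.map_units Q s), hp]
  refine h p ?_
  rw [map_mul, ← hp, ← mul_assoc]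
  exact Ideal.mul_mem_right _ _ hz

variable {R σ : Type*} [CommRing R] (𝔫 : Ideal R) [𝔫.IsPrime]

local notation "Q₀" => Localization.AtPrime (Ideal.comap (constantCoeff (σ := σ)) 𝔫)

theorem map_map_C_localization (J : Ideal R) :
    J.map (algebraMap R Q₀) = (J.map (C (σ := σ))).map (algebraMap _ Q₀) := by
  rw [Ideal.map_map, IsScalarTower.algebraMap_eq R (MvPolynomial σ R) Q₀, algebraMap_eq]

theorem isColonFlat_bot_localization : IsColonFlat R (⊥ : Ideal Q₀) := by
  intro J x z hz
  rw [sup_bot_eq, map_map_C_localization] at hz ⊢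
  rw [IsScalarTower.algebraMap_apply R (MvPolynomial σ R), algebraMap_eq] at hz
  refine mem_of_algebraMap_mul_mem (𝔫.comap constantCoeff).primeCompl (fun p hp ↦ ?_) hz
  obtain ⟨s, hs, hsp⟩ := (mem_originSaturation_iff (I := J.map C)).mp hp
  refine mem_originSaturation_iff.mpr ⟨s, hs, mem_map_C_iff.mpr fun m ↦ ?_⟩
  have hm := mem_map_C_iff.mp hsp m
  rw [mul_left_comm, coeff_C_mul, mul_comm] at hm
  exact Submodule.mem_colon_singleton.mpr hm

variable {𝔫} [IsNoetherianRing R] [Finite σ] {h : σ → MvPolynomial σ R} {T : Set σ} {i : σ}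

theorem IsColonFlat.isSMulRegular_of_isDistinguished
    (hflat : IsColonFlat R ((Ideal.span (h '' T)).map (algebraMap _ Q₀)))
    (hT : ∀ j ∈ T, IsDistinguished 𝔫 j (h j)) (hhi : IsDistinguished 𝔫 i (h i)) (hi : i ∉ T)
    (J : Ideal R) :
    IsSMulRegular (Q₀ ⧸ J.map (algebraMap R Q₀) ⊔ (Ideal.span (h '' T)).map (algebraMap _ Q₀))
      (algebraMap _ Q₀ (h i)) := by
  have : IsNoetherianRing Q₀ :=
    IsLocalization.isNoetherianRing (𝔫.comap (constantCoeff (σ := σ))).primeCompl Q₀ inferInstance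
  refine hflat.isSMulRegular 𝔫 ?_ (fun J h𝔫J ↦ ?_) J
  · rw [map_map_C_localization,
      ← IsLocalization.AtPrime.map_eq_maximalIdeal (𝔫.comap (constantCoeff (σ := σ)))]
    refine Ideal.map_mono (Ideal.map_le_iff_le_comap.mpr fun x hx ↦ ?_)
    simpa using hx
  · rw [isSMulRegular_quotient_iff, map_map_C_localization, ← Ideal.map_sup]
    intro z hz
    exact mem_of_algebraMap_mul_mem (𝔫.comap (constantCoeff (σ := σ))).primeCompl (Q := Q₀)
      (fun p hp ↦ hhi.mem_originSaturation_map_C_sup_of_mul_mem h𝔫J hT hi hp) hz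

theorem isColonFlat_of_isDistinguished (hT : ∀ j ∈ T, IsDistinguished 𝔫 j (h j)) :
    IsColonFlat R ((Ideal.span (h '' T)).map (algebraMap _ Q₀)) := by
  induction T, T.toFinite using Set.Finite.induction_on with
  | empty => simpa using isColonFlat_bot_localization 𝔫
  | @insert i T hi _ ih =>
    have hT' : ∀ j ∈ T, IsDistinguished 𝔫 j (h j) := fun j hj ↦ hT j (Set.mem_insert_of_mem i hj)
    have := (ih hT').sup_span_singleton ((ih hT').isSMulRegular_of_isDistinguished hT'
      (hT i (Set.mem_insert i T)) hi)
    rwa [Set.image_insert_eq, Ideal.span_insert, Ideal.map_sup, Ideal.map_span _ {h i},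
      Set.image_singleton]

theorem mem_originSaturation_of_C_mul_mem_of_isNoetherianRing [IsDomain R]
    (hT : ∀ j ∈ T, IsDistinguished 𝔫 j (h j)) {d : R} (hd : d ≠ 0) {z : MvPolynomial σ R}
    (hz : C d * z ∈ Ideal.span (h '' T)) : z ∈ originSaturation 𝔫 (Ideal.span (h '' T)) := by
  have hcolon : ((⊥ : Ideal R).colon {d}) = ⊥ := by
    ext r
    simp [Submodule.mem_colon_singleton, hd]
  have := isColonFlat_of_isDistinguished hT ⊥ d (algebraMap _ _ z)
  rw [hcolon, Ideal.map_bot, bot_sup_eq, IsScalarTower.algebraMap_apply R (MvPolynomial σ R),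
    algebraMap_eq, ← map_mul] at this
  exact this (Ideal.mem_map_of_mem _ hz)

theorem mem_originSaturation_of_mul_mem_of_isNoetherianRing
    (hT : ∀ j ∈ T, IsDistinguished 𝔫 j (h j)) (hhi : IsDistinguished 𝔫 i (h i)) (hi : i ∉ T)
    {z : MvPolynomial σ R} (hz : h i * z ∈ Ideal.span (h '' T)) :
    z ∈ originSaturation 𝔫 (Ideal.span (h '' T)) := by
  have := (isColonFlat_of_isDistinguished hT).isSMulRegular_of_isDistinguished hT hhi hi ⊥
  rw [isSMulRegular_quotient_iff, Ideal.map_bot, bot_sup_eq] at this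
  refine this (algebraMap _ _ z) ?_
  rw [← map_mul]
  exact Ideal.mem_map_of_mem _ hz

end Noetherian

section Descent

theorem exists_subalgebra_isNoetherianRing_forall_exists_map_eq {σ V : Type*} [CommRing V]
    {s : Set (MvPolynomial σ V)} (hs : s.Finite) :
    ∃ R : Subalgebra ℤ V, IsNoetherianRing R ∧
      ∀ p ∈ s, ∃ q : MvPolynomial σ R, map (algebraMap R V) q = p := by
  refine ⟨Algebra.adjoin ℤ (⋃ p ∈ s, (p.coeffs : Set V)), ?_, fun p hp ↦ ?_⟩
  · exact isNoetherianRing_of_fg (Subalgebra.fg_def.mpr ⟨_,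
      hs.biUnion fun p _ ↦ Finset.finite_toSet _, rfl⟩)
  · refine mem_range_map_iff_coeffs_subset.mpr fun c hc ↦ ?_
    exact ⟨⟨c, Algebra.subset_adjoin (Set.mem_biUnion hp hc)⟩, rfl⟩

theorem IsDistinguished.of_map {σ R V : Type*} [CommRing R] [CommRing V] {φ : R →+* V}
    {𝔫 : Ideal V} {i : σ} {h w : MvPolynomial σ R} {e : ℕ} (hw : constantCoeff (map φ w) ∉ 𝔫)
    (hh : map φ h - map φ w * X i ^ e ∈ 𝔫.map C) : IsDistinguished (𝔫.comap φ) i h := by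
  refine ⟨w, e, by rwa [Ideal.mem_comap, ← constantCoeff_map], mem_map_C_iff.mpr fun m ↦ ?_⟩
  rw [Ideal.mem_comap, ← coeff_map]
  simpa using mem_map_C_iff.mp hh m

variable {σ V : Type*} [CommRing V] {𝔫 : Ideal V} {h : σ → MvPolynomial σ V}
  {T : Set σ}

theorem exists_isNoetherianRing_lift_of_mul_mem_span [Finite σ] {f z : MvPolynomial σ V}
    (hz : f * z ∈ Ideal.span (h '' T)) :
    ∃ (R : Subalgebra ℤ V) (_ : IsNoetherianRing R) (h' : σ → MvPolynomial σ R)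
      (f' z' : MvPolynomial σ R), (∀ i, map (algebraMap R V) (h' i) = h i) ∧
      map (algebraMap R V) f' = f ∧ map (algebraMap R V) z' = z ∧
      (∀ i, IsDistinguished 𝔫 i (h i) →
        IsDistinguished (𝔫.comap (algebraMap R V)) i (h' i)) ∧
      f' * z' ∈ Ideal.span (h' '' T) := by
  have := Fintype.ofFinite T
  rw [Set.image_eq_range, Ideal.mem_span_range_iff_exists_fun] at hz
  obtain ⟨c, hc⟩ := hz
  choose! w e hw hh using fun i (hi : IsDistinguished 𝔫 i (h i)) ↦ hi
  obtain ⟨R, hR, hlift⟩ := exists_subalgebra_isNoetherianRing_forall_exists_map_eq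
    (((Set.finite_range h).union (Set.finite_range w)).union
      ((Set.finite_range c).union (Set.toFinite {f, z})))
  choose h' hh' using fun i ↦ hlift (h i) (by simp)
  choose w' hw' using fun i ↦ hlift (w i) (by simp)
  choose c' hc' using fun i ↦ hlift (c i) (by simp)
  obtain ⟨f', hf'⟩ := hlift f (by simp)
  obtain ⟨z', hz'⟩ := hlift z (by simp)
  refine ⟨R, hR, h', f', z', hh', hf', hz', fun i hi ↦ ?_, ?_⟩
  · exact .of_map (w := w' i) (hw' i ▸ hw i hi) (hw' i ▸ hh' i ▸ hh i hi)
  · rw [Set.image_eq_range, Ideal.mem_span_range_iff_exists_fun]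
    refine ⟨c', map_injective (algebraMap R V) Subtype.val_injective ?_⟩
    simpa [hh', hc', hf', hz'] using hc

variable [𝔫.IsPrime]

theorem map_mem_originSaturation_of_comap {R : Type*} [CommRing R] {φ : R →+* V}
    {h' : σ → MvPolynomial σ R} (hh' : ∀ i, map φ (h' i) = h i) {z' : MvPolynomial σ R}
    (hz' : z' ∈ originSaturation (𝔫.comap φ) (Ideal.span (h' '' T))) :
    map φ z' ∈ originSaturation 𝔫 (Ideal.span (h '' T)) := by
  refine map_mem_originSaturation (map φ) (fun s hs ↦ ?_) ?_ hz'
  · rwa [constantCoeff_map]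
  · simp only [Ideal.map_span, Set.image_image, hh', le_refl]

variable [Finite σ]

theorem mem_originSaturation_span_of_C_mul_mem [IsDomain V]
    (hT : ∀ j ∈ T, IsDistinguished 𝔫 j (h j)) {d : V} (hd : d ≠ 0)
    {z : MvPolynomial σ V} (hz : C d * z ∈ Ideal.span (h '' T)) :
    z ∈ originSaturation 𝔫 (Ideal.span (h '' T)) := by
  obtain ⟨R, hR, h', f', z', hh', hf', rfl, hdist, hz'⟩ :=
    exists_isNoetherianRing_lift_of_mul_mem_span (𝔫 := 𝔫) hz
  have hd' : algebraMap R V (constantCoeff f') = d := by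
    rw [← constantCoeff_map, hf', constantCoeff_C]
  have hf'C : f' = C (constantCoeff f') :=
    map_injective (algebraMap R V) Subtype.val_injective (by rw [hf', map_C, hd'])
  rw [hf'C] at hz'
  refine map_mem_originSaturation_of_comap hh'
    (mem_originSaturation_of_C_mul_mem_of_isNoetherianRing (fun j hj ↦ hdist j (hT j hj)) ?_ hz')
  rintro h0
  rw [h0, map_zero] at hd'
  exact hd hd'.symm

theorem mem_originSaturation_span_of_mul_mem (hT : ∀ j ∈ T, IsDistinguished 𝔫 j (h j))
    {i : σ} (hhi : IsDistinguished 𝔫 i (h i)) (hi : i ∉ T)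
    {z : MvPolynomial σ V} (hz : h i * z ∈ Ideal.span (h '' T)) :
    z ∈ originSaturation 𝔫 (Ideal.span (h '' T)) := by
  obtain ⟨R, hR, h', f', z', hh', hf', rfl, hdist, hz'⟩ :=
    exists_isNoetherianRing_lift_of_mul_mem_span (𝔫 := 𝔫) hz
  obtain rfl : f' = h' i :=
    map_injective (algebraMap R V) Subtype.val_injective (by rw [hf', hh'])
  exact map_mem_originSaturation_of_comap hh'
    (mem_originSaturation_of_mul_mem_of_isNoetherianRing (fun j hj ↦ hdist j (hT j hj))
      (hdist i hhi) hi hz')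

end Descent

section Saturated

theorem exists_finite_forall_exists_map_le {α β : Type*} [PartialOrder α] [WellQuasiOrderedLE α]
    (φ : β → α) (S : Set β) : ∃ G ⊆ S, G.Finite ∧ ∀ f ∈ S, ∃ g ∈ G, φ g ≤ φ f := by
  have hfin : {a | Minimal (· ∈ φ '' S) a}.Finite :=
    WellQuasiOrderedLE.finite_of_isAntichain (setOfPred_minimal_antichain _)
  obtain ⟨G, hGS, hG, himage⟩ := hfin.exists_subset_finite_image_eq fun _ ha ↦ ha.prop
  refine ⟨G, hGS, hG, fun f hf ↦ ?_⟩
  obtain ⟨a, haf, ha⟩ :=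
    exists_minimal_le_of_wellFoundedLT (· ∈ φ '' S) _ (Set.mem_image_of_mem φ hf)
  obtain ⟨g, hg, rfl⟩ := himage.ge ha
  exact ⟨g, hg, haf⟩

theorem exists_sub_monomial_mul_eq_zero_or_degree_lt {k σ : Type*} [Field k]
    (mo : MonomialOrder σ) (f : MvPolynomial σ k) {g : MvPolynomial σ k} (hg : g ≠ 0)
    (hgf : mo.degree g ≤ mo.degree f) :
    ∃ c, f - monomial (mo.degree f - mo.degree g) c * g = 0 ∨
      mo.toSyn (mo.degree (f - monomial (mo.degree f - mo.degree g) c * g)) <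
        mo.toSyn (mo.degree f) := by
  have hlc : IsUnit (mo.leadingCoeff g) := (mo.leadingCoeff_ne_zero_iff.mpr hg).isUnit
  refine ⟨hlc.unit⁻¹ * mo.leadingCoeff f, ?_⟩
  by_cases hf : mo.degree f = 0
  · left
    have hg0 : mo.degree g = 0 := by simpa [hf] using hgf
    calc f - monomial (mo.degree f - mo.degree g) (hlc.unit⁻¹ * mo.leadingCoeff f) * g
      _ = C (mo.leadingCoeff f) - C (hlc.unit⁻¹ * mo.leadingCoeff f) * C (mo.leadingCoeff g) := by
        rw [← mo.eq_C_of_degree_eq_zero hf, ← mo.eq_C_of_degree_eq_zero hg0, hf, hg0, tsub_zero,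
          monomial_zero']
      _ = 0 := by
        rw [← C_mul, mul_right_comm, IsUnit.val_inv_mul, one_mul, sub_self]
  · exact Or.inr (MonomialOrder.degree_reduce_lt hlc hgf hf)

variable {V σ : Type*} [CommRing V]

section IsLocalRing

variable [IsLocalRing V] (mo : MonomialOrder σ)

theorem degree_degree_map_le_totalDegree {R S : Type*} [CommSemiring R] [CommSemiring S]
    (φ : R →+* S) (f : MvPolynomial σ R) :
    (mo.degree (map φ f)).degree ≤ f.totalDegree := by
  by_cases hf : map φ f = 0
  · simp [hf]
  · have hmem := support_map_subset _ _ (mo.degree_mem_support hf)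
    simpa [Finsupp.degree_apply, Finsupp.sum] using le_totalDegree hmem

/-- Dickson's lemma, applied to the leading exponents of the residues together with the excess of
the total degrees over them. -/
theorem exists_finite_forall_exists_degree_le [Finite σ] (I : Set (MvPolynomial σ V)) :
    ∃ G ⊆ I, G.Finite ∧ ∀ f ∈ I, map (residue V) f ≠ 0 → ∃ g ∈ G, map (residue V) g ≠ 0 ∧
      mo.degree (map (residue V) g) ≤ mo.degree (map (residue V) f) ∧
      (mo.degree (map (residue V) f) - mo.degree (map (residue V) g)).degree + g.totalDegree ≤
        f.totalDegree := by
  obtain ⟨G, hGI, hG, h⟩ := exists_finite_forall_exists_map_le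
    (fun f : MvPolynomial σ V ↦ (f.totalDegree - (mo.degree (map (residue V) f)).degree,
      mo.degree (map (residue V) f))) {f ∈ I | map (residue V) f ≠ 0}
  refine ⟨G, hGI.trans fun f hf ↦ hf.1, hG, fun f hf hf0 ↦ ?_⟩
  obtain ⟨g, hg, hle, hdeg⟩ := h f ⟨hf, hf0⟩
  refine ⟨g, hg, (hGI hg).2, hdeg, ?_⟩
  have hadd := congr_arg Finsupp.degree (tsub_add_cancel_of_le hdeg)
  rw [map_add] at hadd
  have hf' := degree_degree_map_le_totalDegree mo (residue V) f
  have hg' := degree_degree_map_le_totalDegree mo (residue V) g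
  dsimp only at hle hadd ⊢
  omega

variable {mo} {I : Ideal (MvPolynomial σ V)} {G : Set (MvPolynomial σ V)}

theorem exists_sub_mem_span_map_residue_eq_zero (hGI : G ⊆ I)
    (hG : ∀ f ∈ I, map (residue V) f ≠ 0 → ∃ g ∈ G, map (residue V) g ≠ 0 ∧
      mo.degree (map (residue V) g) ≤ mo.degree (map (residue V) f) ∧
      (mo.degree (map (residue V) f) - mo.degree (map (residue V) g)).degree + g.totalDegree ≤
        f.totalDegree) {f : MvPolynomial σ V} (hf : f ∈ I) :
    ∃ r ∈ I, r.totalDegree ≤ f.totalDegree ∧ map (residue V) r = 0 ∧ f - r ∈ Ideal.span G := by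
  induction hy : mo.toSyn (mo.degree (map (residue V) f)) using WellFoundedLT.induction
    generalizing f with
  | ind y ih =>
    by_cases hf0 : map (residue V) f = 0
    · exact ⟨f, hf, le_rfl, hf0, by simp⟩
    obtain ⟨g, hg, hg0, hle, htot⟩ := hG f hf hf0
    obtain ⟨c, hc⟩ := exists_sub_monomial_mul_eq_zero_or_degree_lt mo (map (residue V) f) hg0 hle
    obtain ⟨c, rfl⟩ := residue_surjective c
    set α := mo.degree (map (residue V) f) - mo.degree (map (residue V) g)
    rw [← map_monomial, ← map_mul, ← map_sub] at hc
    have hspan : monomial α c * g ∈ Ideal.span G :=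
      Ideal.mul_mem_left _ _ (Ideal.subset_span hg)
    have hmem : f - monomial α c * g ∈ I := sub_mem hf (I.mul_mem_left _ (hGI hg))
    have hdeg : (f - monomial α c * g).totalDegree ≤ f.totalDegree := by
      have hα : (monomial α c).totalDegree ≤ α.degree := by
        simpa [Finsupp.degree_apply, Finsupp.sum] using totalDegree_monomial_le α c
      exact (totalDegree_sub _ _).trans (max_le le_rfl ((totalDegree_mul _ _).trans (by omega)))
    obtain hc | hc := hc
    · exact ⟨_, hmem, hdeg, hc, by simpa using hspan⟩
    · obtain ⟨r, hr, hrdeg, hr0, hfr⟩ := ih _ (hy ▸ hc) hmem rfl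
      refine ⟨r, hr, hrdeg.trans hdeg, hr0, ?_⟩
      simpa [sub_right_comm] using add_mem hfr hspan

end IsLocalRing

variable [IsDomain V] [ValuationRing V]

theorem fg_of_forall_mem_of_smul_mem {M : Type*} [AddCommGroup M] [Module V M] [Module.Finite V M]
    (N : Submodule V M) (hN : ∀ (d : V) (x : M), d ≠ 0 → d • x ∈ N → x ∈ N) : N.FG := by
  have htors : Submodule.torsion V (M ⧸ N) = ⊥ := by
    refine (Submodule.eq_bot_iff _).mpr fun y hy ↦ ?_
    obtain ⟨x, rfl⟩ := N.mkQ_surjective y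
    obtain ⟨d, hd⟩ := (Submodule.mem_torsion_iff _).mp hy
    exact (Submodule.Quotient.mk_eq_zero N).mpr
      (hN d x (nonZeroDivisors.coe_ne_zero d) ((Submodule.Quotient.mk_eq_zero N).mp hd))
  have : Module.Flat V (M ⧸ N) := Module.Flat.flat_iff_torsion_eq_bot_of_isBezout.mpr htors
  have : Module.Free V (M ⧸ N) := Module.free_of_flat_of_isLocalRing
  have : Module.FinitePresentation V (M ⧸ N) := Module.finitePresentation_of_projective V _
  simpa using Module.FinitePresentation.fg_ker N.mkQ N.mkQ_surjective

theorem exists_eq_C_mul_of_map_residue_eq_zero {f : MvPolynomial σ V} (hf : f ≠ 0)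
    (h : map (residue V) f = 0) : ∃ c ∈ maximalIdeal V, c ≠ 0 ∧ ∃ g, f = C c * g := by
  obtain ⟨c, hc⟩ := (IsBezout.isPrincipal_of_FG (Ideal.span (f.coeffs : Set V)) ⟨_, rfl⟩).principal
  have hdvd (k : σ →₀ ℕ) : c ∣ coeff k f := by
    by_cases hk : coeff k f = 0
    · simp [hk]
    · exact Ideal.mem_span_singleton.mp (hc.le (Ideal.subset_span (coeff_mem_coeffs k hk)))
  obtain ⟨g, hg⟩ := (C_dvd_iff_dvd_coeff c f).mpr hdvd
  refine ⟨c, ?_, ?_, g, hg⟩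
  · have hle : Ideal.span (f.coeffs : Set V) ≤ maximalIdeal V := by
      refine Ideal.span_le.mpr fun x hx ↦ ?_
      obtain ⟨k, -, rfl⟩ := mem_coeffs_iff.mp hx
      rw [SetLike.mem_coe, ← residue_eq_zero_iff, ← coeff_map, h, coeff_zero]
    exact hle (hc ▸ Submodule.mem_span_singleton_self c)
  · rintro rfl
    exact hf (by simpa using hg)

variable [Finite σ]

/-- The polynomials of bounded total degree in `I` form a finite `V`-module, to which Nakayama's
lemma applies: its generators of nonzero residue are accounted for by Dickson's lemma, and the
others are multiples of elements of the maximal ideal. -/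
theorem ideal_fg_of_forall_mem_of_C_mul_mem (I : Ideal (MvPolynomial σ V))
    (hI : ∀ (d : V) (p : MvPolynomial σ V), d ≠ 0 → C d * p ∈ I → p ∈ I) : I.FG := by
  let _ : LinearOrder σ := LinearOrder.lift' (Finite.equivFin σ) (Finite.equivFin σ).injective
  obtain ⟨G, hGI, hGfin, hG⟩ :=
    exists_finite_forall_exists_degree_le MonomialOrder.lex (I : Set (MvPolynomial σ V))
  suffices hIG : I ≤ Ideal.span G from
    (le_antisymm hIG (Ideal.span_le.mpr hGI)) ▸ Submodule.fg_span hGfin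
  intro f hf
  let D := restrictTotalDegree σ V f.totalDegree
  let N : Submodule V (MvPolynomial σ V) := I.restrictScalars V ⊓ D
  have hN (x : MvPolynomial σ V) : x ∈ N ↔ x ∈ I ∧ x.totalDegree ≤ f.totalDegree :=
    and_congr Iff.rfl (mem_restrictTotalDegree _ _ _)
  have hfg : N.FG := by
    have hcomap : (Submodule.comap D.subtype (I.restrictScalars V)).FG :=
      fg_of_forall_mem_of_smul_mem _ fun c x hc hx ↦ hI c x hc (by rwa [← smul_eq_C_mul])
    simpa [N, Submodule.map_comap_subtype, inf_comm] using hcomap.map D.subtype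
  suffices hle : N ≤ (Ideal.span G).restrictScalars V from hle ((hN f).mpr ⟨hf, le_rfl⟩)
  refine Submodule.le_of_le_smul_of_le_jacobson_bot hfg (maximalIdeal_le_jacobson ⊥) fun x hx ↦ ?_
  obtain ⟨r, hr, hrdeg, hr0, hxr⟩ :=
    exists_sub_mem_span_map_residue_eq_zero hGI hG ((hN x).mp hx).1
  rw [← sub_add_cancel x r]
  refine Submodule.add_mem_sup hxr ?_
  by_cases hrz : r = 0
  · exact hrz ▸ zero_mem _
  obtain ⟨c, hc, hc0, g, rfl⟩ := exists_eq_C_mul_of_map_residue_eq_zero hrz hr0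
  rw [← smul_eq_C_mul]
  refine Submodule.smul_mem_smul hc ((hN g).mpr ⟨hI c g hc0 hr, ?_⟩)
  rw [totalDegree_mul_of_isDomain (by simpa) (by rintro rfl; simp at hrz), totalDegree_C,
    zero_add] at hrdeg
  exact hrdeg.trans ((hN x).mp hx).2

end Saturated

section Rabinowitsch

open RingTheory.Sequence
open scoped Polynomial

variable {A : Type*} [CommRing A]

theorem isWeaklyRegular_away_of_forall_mul_mem {s : A} {l : List A}
    (h : ∀ (j : ℕ) (hj : j < l.length) (z : A), l[j] * z ∈ Ideal.ofList (l.take j) →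
      s * z ∈ Ideal.ofList (l.take j)) :
    IsWeaklyRegular (Localization.Away s) l := by
  rw [← isWeaklyRegular_map_algebraMap_iff (Localization.Away s), isWeaklyRegular_iff]
  intro j hj
  rw [List.length_map] at hj
  rw [← List.map_take, ← Ideal.map_ofList, List.getElem_map, smul_eq_mul, Ideal.mul_top,
    isSMulRegular_quotient_iff]
  intro y hy
  obtain ⟨z, n, rfl⟩ := IsLocalization.exists_mk'_eq (Submonoid.powers s) y
  rw [← IsLocalization.mk'_one (M := Submonoid.powers s) (Localization.Away s) l[j],
    ← IsLocalization.mk'_mul, one_mul, IsLocalization.mk'_mem_map_algebraMap_iff] at hy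
  obtain ⟨t, ht, htz⟩ := hy
  rw [mul_left_comm] at htz
  refine (IsLocalization.mk'_mem_map_algebraMap_iff (Submonoid.powers s) _ _ _ _).mpr
    ⟨s * t, mul_mem (Submonoid.mem_powers s) ht, ?_⟩
  rw [mul_assoc]
  exact h j hj _ htz

theorem isWeaklyRegular_polynomial_cons_map_C [IsDomain A] {s : A} {l : List A}
    (h : IsWeaklyRegular (Localization.Away s) l) :
    IsWeaklyRegular A[X] ((Polynomial.C s * Polynomial.X - 1) :: l.map Polynomial.C) := by
  set q : A[X] := Polynomial.C s * Polynomial.X - 1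
  have hq : q ≠ 0 := fun h0 ↦ by simpa [q] using congr_arg (Polynomial.coeff · 0) h0
  rw [isWeaklyRegular_cons_iff, ← Polynomial.algebraMap_eq, isWeaklyRegular_map_algebraMap_iff]
  refine ⟨isSMulRegular_iff_right_eq_zero_of_smul.mpr fun x hx ↦
    (mul_eq_zero.mp hx).resolve_left hq, ?_⟩
  let e : QuotSMulTop q A[X] ≃ₗ[A[X]] A[X] ⧸ Ideal.span {q} := Submodule.quotEquivOfEq _ _ (by
    rw [← Submodule.ideal_span_singleton_smul, smul_eq_mul, Ideal.mul_top])
  let e' := (e.restrictScalars A).trans (Localization.awayEquivAdjoin s).symm.toLinearEquiv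
  exact (e'.isWeaklyRegular_congr l).mpr h

theorem exists_C_pow_mul_sub_C_mem_span (b g : A) (p : A[X]) :
    ∃ (k : ℕ) (f : A), Polynomial.C b ^ k * p - Polynomial.C f ∈
      Ideal.span {Polynomial.C b * Polynomial.X - Polynomial.C g} := by
  simp only [Ideal.mem_span_singleton']
  induction p using Polynomial.induction_on with
  | C a => exact ⟨0, a, 0, by simp⟩
  | add p q hp hq =>
    obtain ⟨k, f, c, hc⟩ := hp
    obtain ⟨l, f', c', hc'⟩ := hq
    refine ⟨k + l, b ^ l * f + b ^ k * f', Polynomial.C b ^ l * c + Polynomial.C b ^ k * c', ?_⟩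
    simp only [map_add, map_mul, map_pow]
    linear_combination Polynomial.C b ^ l * hc + Polynomial.C b ^ k * hc'
  | monomial n a h =>
    obtain ⟨k, f, c, hc⟩ := h
    refine ⟨k + 1, f * g, Polynomial.C b * Polynomial.X * c + Polynomial.C f, ?_⟩
    rw [map_mul]
    linear_combination Polynomial.C b * Polynomial.X * hc

theorem ofList_cons_map_C_eq_ker {B : Type*} [CommRing B] (Ψ : A[X] →+* B) {s : A} {l : List A}
    (hl : ∀ a ∈ l, Ψ (Polynomial.C a) = 0) (hs : Ψ (Polynomial.C s * Polynomial.X) = 1)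
    (hker : ∀ a, Ψ (Polynomial.C a) = 0 → s * a ∈ Ideal.ofList l) :
    Ideal.ofList ((Polynomial.C s * Polynomial.X - 1) :: l.map Polynomial.C) = RingHom.ker Ψ := by
  set q : A[X] := Polynomial.C s * Polynomial.X - 1 with hq
  rw [Ideal.ofList_cons, ← Ideal.map_ofList]
  apply le_antisymm
  · refine sup_le (by simp [Ideal.span_le, hq, RingHom.mem_ker, hs]) ?_
    exact Ideal.map_le_iff_le_comap.mpr (Ideal.span_le.mpr hl)
  · intro F hF
    obtain ⟨k, f, hf⟩ := exists_C_pow_mul_sub_C_mem_span s 1 F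
    obtain ⟨c, hc⟩ := Ideal.mem_span_singleton'.mp hf
    rw [map_one, ← hq] at hc
    have hf0 : Ψ (Polynomial.C f) = 0 := by
      have := congr_arg Ψ hc
      simpa [hq, hs, RingHom.mem_ker.mp hF] using this
    have hsf := Ideal.mem_map_of_mem Polynomial.C (hker f hf0)
    obtain ⟨c', hc'⟩ : q ∣ (Polynomial.C s * Polynomial.X) ^ (k + 1) - 1 :=
      sub_one_dvd_pow_sub_one _ _
    have hF' : F = q * (Polynomial.X ^ (k + 1) * Polynomial.C s * c - c' * F) +
        Polynomial.X ^ (k + 1) * Polynomial.C (s * f) := by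
      rw [map_mul]
      linear_combination -F * hc' - Polynomial.X ^ (k + 1) * Polynomial.C s * hc
    rw [hF']
    exact add_mem (Ideal.mem_sup_left (Ideal.mul_mem_right _ _ (Ideal.mem_span_singleton_self q)))
      (Ideal.mem_sup_right (Ideal.mul_mem_left _ _ hsf))

end Rabinowitsch

section CompleteIntersection

open RingTheory.Sequence
open scoped Polynomial

theorem isCompleteIntersectionOfFiniteType_range {R S B : Type*} [CommRing R] [CommRing S]
    [CommRing B] [Nontrivial B] [Algebra R S] [Algebra R B] {N : ℕ}
    (e : S ≃ₐ[R] MvPolynomial (Fin N) R) {l : List S} (hl : IsWeaklyRegular S l)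
    (Ψ : S →ₐ[R] B) (hker : Ideal.ofList l = RingHom.ker Ψ) :
    Algebra.IsCompleteIntersectionOfFiniteType R Ψ.range := by
  have hmap : Ideal.ofList (l.map e) = (RingHom.ker Ψ).map (e : S →+* MvPolynomial (Fin N) R) := by
    rw [← hker, Ideal.map_ofList]
    rfl
  let E : (MvPolynomial (Fin N) R ⧸ Ideal.ofList (l.map e)) ≃ₐ[R] Ψ.range :=
    (Ideal.quotientEquivAlg _ _ e hmap).symm.trans (Ideal.quotientKerEquivRange Ψ)
  refine ⟨N, (l.map e).length, (l.map e).get, ⟨?_, ?_⟩, ⟨?_⟩⟩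
  · rw [List.ofFn_get]
    exact (e.toAddEquiv.isWeaklyRegular_congr <| List.forall₂_map_right_iff.mpr <|
      List.forall₂_same.mpr fun r _ x ↦ map_mul e r x).mp hl
  · rw [List.ofFn_get, smul_eq_mul, Ideal.mul_top]
    exact (Ideal.Quotient.nontrivial_iff.mp E.toEquiv.nontrivial).symm
  · rw [Set.range_list_get]
    exact E

variable {V σ : Type*} [CommRing V]

theorem ofList_map_eq_span (h : σ → MvPolynomial σ V) (l : List σ) :
    Ideal.ofList (l.map h) = Ideal.span (h '' {i | i ∈ l}) := by
  simp only [Ideal.ofList, List.mem_map, Set.image, Set.mem_ofPred_eq]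

theorem exists_forall_mul_mem_of_fg_originSaturation {𝔫 : Ideal V} [𝔫.IsPrime]
    {I : Ideal (MvPolynomial σ V)} (hI : (originSaturation 𝔫 I).FG) :
    ∃ s, constantCoeff s ∉ 𝔫 ∧ ∀ p ∈ originSaturation 𝔫 I, s * p ∈ I := by
  classical
  obtain ⟨G, hG⟩ := hI
  have hmem (g) (hg : g ∈ G) : ∃ s, constantCoeff s ∉ 𝔫 ∧ s * g ∈ I :=
    mem_originSaturation_iff.mp (hG ▸ Submodule.subset_span hg)
  choose! t ht htg using hmem
  refine ⟨∏ g ∈ G, t g, ?_, fun p hp ↦ ?_⟩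
  · rw [map_prod, Ideal.IsPrime.prod_mem_iff]
    push Not
    exact ht
  · have hle : Ideal.span (G : Set (MvPolynomial σ V)) ≤ I.colon {∏ g ∈ G, t g} :=
      Ideal.span_le.mpr fun g hg ↦ Submodule.mem_colon_singleton.mpr <| by
        rw [smul_eq_mul, ← Finset.mul_prod_erase G t hg, ← mul_assoc, mul_comm g]
        exact I.mul_mem_right _ (htg g hg)
    rw [mul_comm]
    exact Submodule.mem_colon_singleton.mp (hle (hG.ge hp))

variable [Finite σ] {h : σ → MvPolynomial σ V} {T : Set σ}

theorem exists_forall_subset_forall_mul_mem_span [IsDomain V] [ValuationRing V] {𝔫 : Ideal V}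
    [𝔫.IsPrime] (hT : ∀ i ∈ T, IsDistinguished 𝔫 i (h i)) :
    ∃ s, constantCoeff s ∉ 𝔫 ∧ ∀ T' ⊆ T, ∀ p ∈ originSaturation 𝔫 (Ideal.span (h '' T')),
      s * p ∈ Ideal.span (h '' T') := by
  classical
  cases nonempty_fintype σ
  have hex (T' : Set σ) : ∃ s, constantCoeff s ∉ 𝔫 ∧ (T' ⊆ T →
      ∀ p ∈ originSaturation 𝔫 (Ideal.span (h '' T')), s * p ∈ Ideal.span (h '' T')) := by
    by_cases hT' : T' ⊆ T
    · obtain ⟨s, hs, hsT'⟩ := exists_forall_mul_mem_of_fg_originSaturation <|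
        ideal_fg_of_forall_mem_of_C_mul_mem (originSaturation 𝔫 (Ideal.span (h '' T')))
          fun d p hd hp ↦ by
            obtain ⟨t, ht, htp⟩ := mem_originSaturation_iff.mp hp
            rw [mul_left_comm] at htp
            exact mem_originSaturation_of_mul_mem ht <|
              mem_originSaturation_span_of_C_mul_mem (fun i hi ↦ hT i (hT' hi)) hd htp
      exact ⟨s, hs, fun _ ↦ hsT'⟩
    · exact ⟨1, by simpa using (Ideal.ne_top_iff_one 𝔫).mp Ideal.IsPrime.ne_top',
        fun h ↦ absurd h hT'⟩
  choose s hs hsT using hex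
  refine ⟨∏ T', s T', ?_, fun T' hT' p hp ↦ ?_⟩
  · rw [map_prod, Ideal.IsPrime.prod_mem_iff]
    push Not
    exact fun T' _ ↦ hs T'
  · rw [← Finset.mul_prod_erase _ _ (Finset.mem_univ T'), mul_right_comm]
    exact Ideal.mul_mem_right _ _ (hsT T' hT' p hp)

theorem isWeaklyRegular_away_map_of_isDistinguished {𝔫 : Ideal V} [𝔫.IsPrime] {l : List σ}
    (hl : l.Nodup) (hdist : ∀ i ∈ l, IsDistinguished 𝔫 i (h i)) {s : MvPolynomial σ V}
    (hs : ∀ T' ⊆ {i | i ∈ l}, ∀ p ∈ originSaturation 𝔫 (Ideal.span (h '' T')),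
      s * p ∈ Ideal.span (h '' T')) :
    IsWeaklyRegular (Localization.Away s) (l.map h) := by
  refine isWeaklyRegular_away_of_forall_mul_mem fun j hj z hz ↦ ?_
  have hj' : j < l.length := by simpa using hj
  have hsub : {i | i ∈ l.take j} ⊆ {i | i ∈ l} := fun i ↦ List.mem_of_mem_take
  have hnotMem : l[j] ∉ {i | i ∈ l.take j} := by
    rw [Set.mem_ofPred_eq, List.mem_take_iff_getElem]
    rintro ⟨k, hk, hkj⟩
    have := hl.getElem_inj_iff.mp hkj
    omega
  rw [← List.map_take, ofList_map_eq_span] at hz ⊢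
  rw [List.getElem_map] at hz
  exact hs _ hsub z (mem_originSaturation_span_of_mul_mem (fun i hi ↦ hdist i (hsub hi))
    (hdist _ (List.getElem_mem hj')) hnotMem hz)

end CompleteIntersection

section ResidualPresentation

/-- A finite family `φ` of elements of a `V`-algebra `Ω`, together with relations `h i` between
them, indexed by part of the variables: each `h i` reduces modulo the maximal ideal to a power
of the variable `i` times a function not vanishing at the origin, and the `h i` generate all
relations locally at the origin of the closed fibre after inverting the nonzero constants. -/
structure ResidualPresentation (V Ω : Type*) [CommRing V] [IsLocalRing V] [CommRing Ω]
    [Algebra V Ω] where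
  /-- The index type of the variables. -/
  σ : Type
  [finite : Finite σ]
  /-- The values of the variables. -/
  φ : σ → Ω
  /-- The variables carrying a relation. -/
  T : Set σ
  /-- The relations, meaningful on `T` only. -/
  h : σ → MvPolynomial σ V
  isDistinguished : ∀ i ∈ T, IsDistinguished (maximalIdeal V) i (h i)
  aeval_h : ∀ i ∈ T, aeval φ (h i) = 0
  generic : ∀ p, aeval φ p = 0 →
    ∃ d ≠ 0, C d * p ∈ originSaturation (maximalIdeal V) (Ideal.span (h '' T))

namespace ResidualPresentation

attribute [instance] ResidualPresentation.finite

section Loc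

variable {V Ω : Type*} [CommRing V] [IsLocalRing V] [CommRing Ω] [Algebra V Ω]
  (P : ResidualPresentation V Ω)

/-- The elements of `Ω` that are fractions in the values of the variables, with denominators of
unit constant coefficient. When the values lie in the maximal ideal of a local ring `Ω`, this is
a localization of the `V`-subalgebra they generate. -/
def loc : Subalgebra V Ω where
  carrier := {x | ∃ s p : MvPolynomial P.σ V,
    IsUnit (constantCoeff s) ∧ aeval P.φ s * x = aeval P.φ p}
  mul_mem' := by
    rintro x y ⟨s, p, hs, hx⟩ ⟨t, q, ht, hy⟩
    refine ⟨s * t, p * q, by simpa using ⟨hs, ht⟩, ?_⟩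
    simp only [map_mul, ← hx, ← hy]
    ring
  add_mem' := by
    rintro x y ⟨s, p, hs, hx⟩ ⟨t, q, ht, hy⟩
    refine ⟨s * t, t * p + s * q, by simpa using ⟨hs, ht⟩, ?_⟩
    simp only [map_mul, map_add, ← hx, ← hy]
    ring
  algebraMap_mem' c := ⟨1, C c, by simp, by simp⟩

variable {P}

theorem mem_loc {x : Ω} : x ∈ P.loc ↔
    ∃ s p : MvPolynomial P.σ V, IsUnit (constantCoeff s) ∧ aeval P.φ s * x = aeval P.φ p :=
  Iff.rfl

theorem φ_mem_loc (i : P.σ) : P.φ i ∈ P.loc :=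
  ⟨1, X i, by simp, by simp⟩

theorem exists_common_denominator {E : Finset Ω} (hE : ∀ x ∈ E, x ∈ P.loc) :
    ∃ s : MvPolynomial P.σ V, IsUnit (constantCoeff s) ∧
      ∀ x ∈ E, ∃ p : MvPolynomial P.σ V, aeval P.φ s * x = aeval P.φ p := by
  classical
  simp only [mem_loc] at hE
  choose! s p hs hp using hE
  refine ⟨∏ x ∈ E, s x, ?_, fun x hx ↦ ⟨(∏ y ∈ E.erase x, s y) * p x, ?_⟩⟩
  · rw [map_prod]
    exact IsUnit.prod_iff.mpr hs
  · rw [← Finset.mul_prod_erase E s hx, map_mul, map_mul, ← hp x hx]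
    ring

end Loc

variable {V V' : Type*} [CommRing V] [CommRing V'] [IsLocalRing V'] [Algebra V V']

theorem isUnit_aeval {σ : Type*} {φ : σ → V'} (hφ : ∀ i, φ i ∈ maximalIdeal V')
    {s : MvPolynomial σ V} (hs : IsUnit (constantCoeff s)) : IsUnit (aeval φ s) := by
  have hcomp : (residue V').comp (aeval φ : MvPolynomial σ V →ₐ[V] V').toRingHom =
      ((residue V').comp (algebraMap V V')).comp constantCoeff := by
    ext i
    · simp
    · simp [(residue_eq_zero_iff _).mpr (hφ i)]
  have hunit : IsUnit (residue V' (aeval φ s)) := by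
    have h : residue V' (aeval φ s) = residue V' (algebraMap V V' (constantCoeff s)) :=
      RingHom.congr_fun hcomp s
    rw [h]
    exact (hs.map (algebraMap V V')).map (residue V')
  exact isUnit_of_map_unit (residue V') _ hunit

variable [IsDomain V] [ValuationRing V]

theorem mem_originSaturation_of_aeval_eq_zero {Ω : Type*} [CommRing Ω] [Algebra V Ω]
    (P : ResidualPresentation V Ω) {p : MvPolynomial P.σ V} (hp : aeval P.φ p = 0) :
    p ∈ originSaturation (maximalIdeal V) (Ideal.span (P.h '' P.T)) := by
  obtain ⟨d, hd, hmem⟩ := P.generic p hp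
  obtain ⟨s, hs, hsp⟩ := mem_originSaturation_iff.mp hmem
  rw [mul_left_comm] at hsp
  exact mem_originSaturation_of_mul_mem hs
    (mem_originSaturation_span_of_C_mul_mem P.isDistinguished hd hsp)

open RingTheory.Sequence in
theorem exists_subalgebra_isCompleteIntersectionOfFiniteType (P : ResidualPresentation V V')
    (hφ : ∀ i, P.φ i ∈ maximalIdeal V') {E : Finset V'} (hE : ∀ x ∈ E, x ∈ P.loc) :
    ∃ B : Subalgebra V V', Algebra.IsCompleteIntersectionOfFiniteType V B ∧ ∀ x ∈ E, x ∈ B := by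
  obtain ⟨s₁, hs₁, hrel⟩ := exists_forall_subset_forall_mul_mem_span P.isDistinguished
  obtain ⟨s₂, hs₂, hfrac⟩ := exists_common_denominator hE
  obtain ⟨u, hu⟩ : IsUnit (aeval P.φ (s₁ * s₂)) :=
    isUnit_aeval hφ (by simpa using ⟨notMem_maximalIdeal.mp hs₁, hs₂⟩)
  have hs : ∀ T' ⊆ P.T, ∀ p ∈ originSaturation (maximalIdeal V) (Ideal.span (P.h '' T')),
      s₁ * s₂ * p ∈ Ideal.span (P.h '' T') := fun T' hT' p hp ↦ by
    rw [mul_right_comm]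
    exact Ideal.mul_mem_right _ _ (hrel T' hT' p hp)
  obtain ⟨l, hl, hlT⟩ : ∃ l : List P.σ, l.Nodup ∧ {i | i ∈ l} = P.T :=
    ⟨P.T.toFinite.toFinset.toList, Finset.nodup_toList _, by ext; simp⟩
  have hmem {i : P.σ} (hi : i ∈ l) : i ∈ P.T := hlT.le hi
  have hreg : IsWeaklyRegular (Localization.Away (s₁ * s₂)) (l.map P.h) :=
    isWeaklyRegular_away_map_of_isDistinguished hl (fun i hi ↦ P.isDistinguished i (hmem hi))
      (hlT ▸ hs)
  let Ψ : Polynomial (MvPolynomial P.σ V) →ₐ[V] V' :=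
    Polynomial.eval₂AlgHom (aeval P.φ) (↑u⁻¹ : V') fun _ ↦ Commute.all _ _
  have hΨC (p : MvPolynomial P.σ V) : Ψ (Polynomial.C p) = aeval P.φ p := by simp [Ψ]
  have hΨX : Ψ Polynomial.X = (↑u⁻¹ : V') := by simp [Ψ]
  have hΨs : Ψ (Polynomial.C (s₁ * s₂) * Polynomial.X) = 1 := by
    rw [map_mul, hΨC, hΨX, ← hu, Units.mul_inv]
  have hker := ofList_cons_map_C_eq_ker (s := s₁ * s₂) (l := l.map P.h) (Ψ : _ →+* V')
    (by simpa [hΨC] using fun i hi ↦ P.aeval_h i (hmem hi)) hΨs fun p hp ↦ by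
      rw [ofList_map_eq_span, hlT]
      exact hs _ subset_rfl p (P.mem_originSaturation_of_aeval_eq_zero ((hΨC p).symm.trans hp))
  obtain ⟨N, ⟨e⟩⟩ := Finite.exists_equiv_fin (Option P.σ)
  refine ⟨Ψ.range, isCompleteIntersectionOfFiniteType_range
    ((optionEquivLeft V P.σ).symm.trans (renameEquiv V e))
    (isWeaklyRegular_polynomial_cons_map_C hreg) Ψ hker, fun x hx ↦ ?_⟩
  obtain ⟨p, hp⟩ := hfrac x hx
  refine ⟨Polynomial.X * Polynomial.C (s₁ * p), ?_⟩
  change Ψ _ = x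
  rw [map_mul, hΨC, hΨX, map_mul, ← hp, Units.inv_mul_eq_iff_eq_mul, hu, map_mul, mul_assoc]

end ResidualPresentation

end ResidualPresentation

section OptionVariables

variable {V σ : Type*} [CommRing V]

theorem IsDistinguished.rename {τ : Type*} {𝔫 : Ideal V} {i : σ} {h : MvPolynomial σ V}
    (hh : IsDistinguished 𝔫 i h) (f : σ → τ) : IsDistinguished 𝔫 (f i) (rename f h) := by
  obtain ⟨w, e, hw, hwe⟩ := hh
  refine ⟨MvPolynomial.rename f w, e, by simpa, ?_⟩
  have hmem := Ideal.mem_map_of_mem (MvPolynomial.rename (R := V) f) hwe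
  have hC : (MvPolynomial.rename (R := V) f).toRingHom.comp C = C := RingHom.ext (rename_C f)
  rw [← Ideal.map_coe, Ideal.map_map] at hmem
  change _ ∈ 𝔫.map ((MvPolynomial.rename (R := V) f).toRingHom.comp C) at hmem
  rw [hC] at hmem
  simpa using hmem

theorem IsDistinguished.neg {𝔫 : Ideal V} {i : σ} {h : MvPolynomial σ V}
    (hh : IsDistinguished 𝔫 i h) : IsDistinguished 𝔫 i (-h) := by
  obtain ⟨w, e, hw, hwe⟩ := hh
  exact ⟨-w, e, by simpa, by rw [neg_mul, ← neg_sub']; exact neg_mem hwe⟩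

theorem IsDistinguished.add_right {𝔫 : Ideal V} {i : σ} {h q : MvPolynomial σ V}
    (hh : IsDistinguished 𝔫 i h) (hq : q ∈ 𝔫.map C) : IsDistinguished 𝔫 i (h + q) := by
  obtain ⟨w, e, hw, hwe⟩ := hh
  exact ⟨w, e, hw, by rw [add_sub_right_comm]; exact add_mem hwe hq⟩

theorem IsDistinguished.rename_mul_C_mul_X_sub {𝔫 : Ideal V} {i : σ} {h : MvPolynomial σ V}
    (hh : IsDistinguished 𝔫 i h) (s : MvPolynomial σ V) {t : V} (ht : t ∈ 𝔫) :
    IsDistinguished 𝔫 (some i) (MvPolynomial.rename some (s * C t) * X none -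
      MvPolynomial.rename some h) := by
  rw [sub_eq_neg_add]
  refine (hh.rename some).neg.add_right ?_
  rw [map_mul, rename_C, mul_right_comm]
  exact Ideal.mul_mem_left _ _ (Ideal.mem_map_of_mem C ht)

theorem optionEquivLeft_rename_some (p : MvPolynomial σ V) :
    optionEquivLeft V σ (rename some p) = Polynomial.C p := by
  induction p using MvPolynomial.induction_on <;> simp_all

theorem aeval_elim_rename_some {Ω : Type*} [CommRing Ω] [Algebra V Ω] (y : Ω) (φ : σ → Ω)
    (p : MvPolynomial σ V) : aeval (fun k : Option σ ↦ k.elim y φ) (rename some p) = aeval φ p := by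
  rw [aeval_rename]
  rfl

theorem aeval_elim_eq_aeval_map {Ω Ω' : Type*} [CommRing Ω] [CommRing Ω'] [Algebra V Ω]
    [Algebra V Ω'] [Algebra Ω Ω'] [IsScalarTower V Ω Ω'] (y : Ω') (φ : σ → Ω)
    (p : MvPolynomial (Option σ) V) :
    aeval (fun k : Option σ ↦ k.elim y (algebraMap Ω Ω' ∘ φ)) p = Polynomial.aeval y
      ((optionEquivLeft V σ p).map (aeval φ : MvPolynomial σ V →ₐ[V] Ω).toRingHom) := by
  induction p using MvPolynomial.induction_on with
  | C a => simp [← IsScalarTower.algebraMap_apply]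
  | add p q hp hq => simp [hp, hq]
  | mul_X p k hp => cases k <;> simp [hp]

theorem aeval_aeval_elim_X {Ω : Type*} [CommRing Ω] [Algebra V Ω] (y : Ω) (φ : σ → Ω)
    (p : MvPolynomial (Option σ) V) :
    Polynomial.aeval y (aeval
      (fun k : Option σ ↦ k.elim Polynomial.X (algebraMap Ω (Polynomial Ω) ∘ φ)) p) =
      aeval (fun k : Option σ ↦ k.elim y φ) p := by
  refine (comp_aeval_apply _ ((Polynomial.aeval y).restrictScalars V) p).trans ?_
  congr 2
  ext k
  cases k <;> simp

theorem aeval_elim_rename_mul_X_sub_rename {Ω : Type*} [CommRing Ω] [Algebra V Ω] {y : Ω}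
    {φ : σ → Ω} {b g : MvPolynomial σ V} (hy : aeval φ b * y = aeval φ g) :
    aeval (fun k : Option σ ↦ k.elim y φ) (rename some b * X none - rename some g) = 0 := by
  rw [map_sub, map_mul, aeval_elim_rename_some, aeval_elim_rename_some, aeval_X, Option.elim_none,
    hy, sub_self]

theorem eq_sum_rename_coeff_optionEquivLeft (p : MvPolynomial (Option σ) V) :
    p = (optionEquivLeft V σ p).sum fun k a ↦ rename some a * X none ^ k := by
  apply (optionEquivLeft V σ).injective
  rw [Polynomial.sum_def, map_sum]
  simp only [map_mul, map_pow, optionEquivLeft_rename_some, optionEquivLeft_X_none]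
  exact Polynomial.as_sum_support_C_mul_X_pow _

theorem exists_rename_pow_mul_sub_rename_eq_mul (b g : MvPolynomial σ V)
    (p : MvPolynomial (Option σ) V) : ∃ (k : ℕ) (f : MvPolynomial σ V) (q : _),
      rename some b ^ k * p - rename some f = (rename some b * X none - rename some g) * q := by
  obtain ⟨k, f, hf⟩ := exists_C_pow_mul_sub_C_mem_span b g (optionEquivLeft V σ p)
  obtain ⟨q, hq⟩ := Ideal.mem_span_singleton.mp hf
  refine ⟨k, f, (optionEquivLeft V σ).symm q, (optionEquivLeft V σ).injective ?_⟩
  simpa [optionEquivLeft_rename_some] using hq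

end OptionVariables

section Constructions

namespace ResidualPresentation

variable {V Ω Ω' : Type*} [CommRing V] [IsLocalRing V] [CommRing Ω] [Algebra V Ω] [CommRing Ω']
  [Algebra V Ω']

theorem map_mem_loc {P : ResidualPresentation V Ω} {Q : ResidualPresentation V Ω'}
    (f : Ω →ₐ[V] Ω') (ι : P.σ → Q.σ) (hι : ∀ i, Q.φ (ι i) = f (P.φ i)) {x : Ω} (hx : x ∈ P.loc) :
    f x ∈ Q.loc := by
  obtain ⟨s, p, hs, hsx⟩ := mem_loc.mp hx
  have haeval (q : MvPolynomial P.σ V) : aeval Q.φ (rename ι q) = f (aeval P.φ q) := by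
    rw [aeval_rename, comp_aeval_apply, ← funext hι, Function.comp_def]
  refine mem_loc.mpr ⟨rename ι s, rename ι p, by simpa, ?_⟩
  rw [haeval, haeval, ← hsx, map_mul]

/-- The image of a presentation under an embedding: the values change, the relations do not. -/
def map (P : ResidualPresentation V Ω) (f : Ω →ₐ[V] Ω') (hf : Function.Injective f) :
    ResidualPresentation V Ω' where
  σ := P.σ
  φ i := f (P.φ i)
  T := P.T
  h := P.h
  isDistinguished := P.isDistinguished
  aeval_h i hi := by rw [← comp_aeval_apply, P.aeval_h i hi, map_zero]
  generic p hp := P.generic p (by rwa [← comp_aeval_apply, map_eq_zero_iff f hf] at hp)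

/-- A presentation whose values lie in the image of an embedding `f`, with `ψ` the family of their
preimages, as a presentation over the source of `f`. -/
def comap (P : ResidualPresentation V Ω') (f : Ω →ₐ[V] Ω') (hf : Function.Injective f)
    (ψ : P.σ → Ω) (hψ : ∀ i, f (ψ i) = P.φ i) : ResidualPresentation V Ω where
  σ := P.σ
  φ := ψ
  T := P.T
  h := P.h
  isDistinguished := P.isDistinguished
  aeval_h i hi := by
    rw [← map_eq_zero_iff f hf, comp_aeval_apply, funext hψ, P.aeval_h i hi]
  generic p hp := P.generic p (by rw [← funext hψ, ← comp_aeval_apply, hp, map_zero])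

theorem mem_loc_comap (P : ResidualPresentation V Ω') (f : Ω →ₐ[V] Ω')
    (hf : Function.Injective f) (ψ : P.σ → Ω) (hψ : ∀ i, f (ψ i) = P.φ i) {x : Ω}
    (hx : f x ∈ P.loc) : x ∈ (P.comap f hf ψ hψ).loc := by
  obtain ⟨s, p, hs, hsx⟩ := mem_loc.mp hx
  have haeval (q : MvPolynomial P.σ V) : aeval P.φ q = f (aeval ψ q) := by
    rw [comp_aeval_apply, funext hψ]
  exact mem_loc.mpr ⟨s, p, hs, hf (by rw [map_mul]; exact haeval s ▸ haeval p ▸ hsx)⟩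

/-- The presentation without variables. -/
noncomputable def trivial (hinj : Function.Injective (algebraMap V Ω)) :
    ResidualPresentation V Ω where
  σ := Empty
  φ := Empty.elim
  T := ∅
  h := Empty.elim
  isDistinguished i := i.elim
  aeval_h i := i.elim
  generic p hp := by
    obtain ⟨a, rfl⟩ := C_surjective Empty p
    rw [aeval_C, map_eq_zero_iff _ hinj] at hp
    exact ⟨1, one_ne_zero, by simp [hp]⟩

variable [IsDomain V]

theorem exists_C_mul_mem_originSaturation_of_transcendental (P : ResidualPresentation V Ω)
    [Algebra Ω Ω'] [IsScalarTower V Ω Ω'] {y : Ω'} (hy : Transcendental Ω y)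
    {p : MvPolynomial (Option P.σ) V}
    (hp : aeval (fun k : Option P.σ ↦ k.elim y (algebraMap Ω Ω' ∘ P.φ)) p = 0) :
    ∃ d ≠ 0, C d * p ∈ originSaturation (maximalIdeal V)
      ((Ideal.span (P.h '' P.T)).map (rename some : _ →ₐ[V] MvPolynomial (Option P.σ) V)) := by
  rw [aeval_elim_eq_aeval_map] at hp
  have hcoeff (k : ℕ) : aeval P.φ ((optionEquivLeft V P.σ p).coeff k) = 0 := by
    simpa using congrArg (Polynomial.coeff · k) ((transcendental_iff.mp hy) _ hp)
  choose d hd hmem using fun k ↦ P.generic _ (hcoeff k)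
  refine ⟨∏ k ∈ (optionEquivLeft V P.σ p).support, d k, Finset.prod_ne_zero_iff.mpr fun k _ ↦ hd k,
    ?_⟩
  nth_rw 2 [eq_sum_rename_coeff_optionEquivLeft p]
  rw [Polynomial.sum_def, Finset.mul_sum]
  refine Ideal.sum_mem _ fun k hk ↦ ?_
  obtain ⟨c, hc⟩ := Finset.dvd_prod_of_mem d hk
  have hk' : rename some (C (d k) * (optionEquivLeft V P.σ p).coeff k) ∈ originSaturation
      (maximalIdeal V) ((Ideal.span (P.h '' P.T)).map (rename some : _ →ₐ[V] MvPolynomial _ V)) :=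
    map_mem_originSaturation (rename some : _ →ₐ[V] MvPolynomial (Option P.σ) V).toRingHom
      (fun s hs ↦ by simpa using hs) le_rfl (hmem k)
  convert Ideal.mul_mem_left _ (C c * X none ^ k) hk' using 1
  rw [hc, map_mul, map_mul, rename_C]
  ring

/-- Adjoining a free variable, with a transcendental value. -/
noncomputable def adjoinFree (P : ResidualPresentation V Ω) [Algebra Ω Ω'] [IsScalarTower V Ω Ω']
    (y : Ω') (hy : Transcendental Ω y) : ResidualPresentation V Ω' where
  σ := Option P.σ
  φ k := k.elim y (algebraMap Ω Ω' ∘ P.φ)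
  T := some '' P.T
  h k := k.elim 0 (rename some ∘ P.h)
  isDistinguished := by
    rintro _ ⟨i, hi, rfl⟩
    exact (P.isDistinguished i hi).rename some
  aeval_h := by
    rintro _ ⟨i, hi, rfl⟩
    simp only [Option.elim_some, Function.comp_apply, aeval_elim_rename_some]
    rw [aeval_algebraMap_apply, P.aeval_h i hi, map_zero]
  generic p hp := by
    simpa only [Ideal.map_span, Set.image_image, Option.elim_some, Function.comp_apply]
      using P.exists_C_mul_mem_originSaturation_of_transcendental hy hp

/-- Specializing the values along `f`, which adds a relation `G` for a variable `r` that had none.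
Generically, `G` must generate the relations of the new values modulo those of the old ones. -/
noncomputable def adjoinRelation (P : ResidualPresentation V Ω) {r : P.σ} (hr : r ∉ P.T)
    (f : Ω →ₐ[V] Ω') {G : MvPolynomial P.σ V} (hG : IsDistinguished (maximalIdeal V) r G)
    (hfG : f (aeval P.φ G) = 0)
    (hgen : ∀ p : MvPolynomial P.σ V, f (aeval P.φ p) = 0 → ∃ d ≠ 0, ∃ s q : MvPolynomial P.σ V,
      IsUnit (constantCoeff s) ∧ aeval P.φ (C d * s * p) = aeval P.φ (G * q)) :
    ResidualPresentation V Ω' :=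
  letI := Classical.decEq P.σ
  have hne {i : P.σ} (hi : i ∈ P.T) : i ≠ r := fun h ↦ hr (h ▸ hi)
  { σ := P.σ
    φ i := f (P.φ i)
    T := insert r P.T
    h := Function.update P.h r G
    isDistinguished := by
      rintro i (rfl | hi)
      · simpa using hG
      · simpa [hne hi] using P.isDistinguished i hi
    aeval_h := by
      rintro i (rfl | hi)
      · simpa [← comp_aeval_apply] using hfG
      · simp [← comp_aeval_apply, hne hi, P.aeval_h i hi]
    generic p hp := by
      obtain ⟨d, hd, s, q, hs, hpq⟩ := hgen p (by rwa [comp_aeval_apply])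
      obtain ⟨d', hd', hmem⟩ := P.generic (C d * s * p - G * q) (by rw [map_sub, hpq, sub_self])
      have himage : Function.update P.h r G '' insert r P.T = insert G (P.h '' P.T) := by
        rw [Set.image_insert_eq, Function.update_self,
          Set.image_congr fun i hi ↦ Function.update_of_ne (hne hi) G P.h]
      refine ⟨d' * d, mul_ne_zero hd' hd,
        mem_originSaturation_of_mul_mem (notMem_maximalIdeal.mpr hs) ?_⟩
      rw [himage]
      have hGmem : G ∈ originSaturation (maximalIdeal V) (Ideal.span (insert G (P.h '' P.T))) :=
        le_originSaturation (Ideal.subset_span (Set.mem_insert _ _))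
      convert Ideal.add_mem _ (originSaturation_mono (Ideal.span_mono (Set.subset_insert _ _)) hmem)
        (Ideal.mul_mem_right (C d' * q) _ hGmem) using 1
      rw [C_mul]
      ring }

theorem map_mem_loc_adjoinRelation (P : ResidualPresentation V Ω) {r : P.σ} (hr : r ∉ P.T)
    (f : Ω →ₐ[V] Ω') {G : MvPolynomial P.σ V} (hG : IsDistinguished (maximalIdeal V) r G)
    (hfG : f (aeval P.φ G) = 0) (hgen) {x : Ω} (hx : x ∈ P.loc) :
    f x ∈ (P.adjoinRelation hr f hG hfG hgen).loc :=
  map_mem_loc f id (fun _ ↦ rfl) hx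

theorem exists_C_mul_mul_eq_of_eval_eq_zero (P : ResidualPresentation V Ω)
    {s G : MvPolynomial P.σ V} {t : V} {y : Ω} (hs : IsUnit (constantCoeff s)) (ht : t ≠ 0)
    (hy : aeval P.φ (s * C t) * y = aeval P.φ G) {p : MvPolynomial (Option P.σ) V}
    (hp : aeval (fun k : Option P.σ ↦ k.elim y P.φ) p = 0) :
    ∃ d ≠ 0, ∃ s' q : MvPolynomial (Option P.σ) V, IsUnit (constantCoeff s') ∧
      aeval (fun k : Option P.σ ↦ k.elim Polynomial.X (algebraMap Ω (Polynomial Ω) ∘ P.φ))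
        (C d * s' * p) =
      aeval (fun k : Option P.σ ↦ k.elim Polynomial.X (algebraMap Ω (Polynomial Ω) ∘ P.φ))
        ((rename some (s * C t) * X none - rename some G) * q) := by
  obtain ⟨k, f, q, hq⟩ := exists_rename_pow_mul_sub_rename_eq_mul (s * C t) G p
  have hf : aeval P.φ f = 0 := by
    have := congrArg (aeval fun k : Option P.σ ↦ k.elim y P.φ) hq
    rwa [map_mul (aeval _), aeval_elim_rename_mul_X_sub_rename hy, zero_mul, map_sub, map_mul,
      hp, mul_zero, zero_sub, neg_eq_zero, aeval_elim_rename_some] at this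
  refine ⟨t ^ k, pow_ne_zero k ht, rename some s ^ k, q, by simpa using hs.pow k, ?_⟩
  have hpq : C (t ^ k) * rename some s ^ k * p =
      (rename some (s * C t) * X none - rename some G) * q + rename some f := by
    rw [← hq, map_mul, rename_C, C_pow]
    ring
  rw [hpq, map_add, aeval_elim_rename_some, aeval_algebraMap_apply, hf, map_zero, add_zero]

/-- Adjoining a fraction `y = G / (s t)` whose denominator vanishes on the closed fibre. The
equation `s t y = G` serves as the relation of the variable `r`. -/
noncomputable def adjoinFraction (P : ResidualPresentation V Ω) {r : P.σ} (hr : r ∉ P.T)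
    {s G : MvPolynomial P.σ V} {t : V} {y : Ω} (hs : IsUnit (constantCoeff s))
    (ht : t ∈ maximalIdeal V) (ht0 : t ≠ 0) (hG : IsDistinguished (maximalIdeal V) r G)
    (hy : aeval P.φ (s * C t) * y = aeval P.φ G) : ResidualPresentation V Ω :=
  (P.adjoinFree (Polynomial.X : Polynomial Ω) (Polynomial.transcendental_X Ω)).adjoinRelation
    (r := some r) (by rintro ⟨i, hi, h⟩; exact hr (Option.some_injective _ h ▸ hi))
    ((Polynomial.aeval y).restrictScalars V) (G := rename some (s * C t) * X none - rename some G)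
    (hG.rename_mul_C_mul_X_sub s ht)
    ((aeval_aeval_elim_X y P.φ _).trans (aeval_elim_rename_mul_X_sub_rename hy))
    fun p hp ↦ P.exists_C_mul_mul_eq_of_eval_eq_zero hs ht0 hy
      ((aeval_aeval_elim_X y P.φ p).symm.trans hp)

theorem φ_adjoinFraction (P : ResidualPresentation V Ω) {r : P.σ} (hr : r ∉ P.T)
    {s G : MvPolynomial P.σ V} {t : V} {y : Ω} (hs ht ht0 hG)
    (hy : aeval P.φ (s * C t) * y = aeval P.φ G) (k : Option P.σ) :
    (P.adjoinFraction hr hs ht ht0 hG hy).φ k = k.elim y P.φ := by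
  cases k <;> simp [adjoinFraction, adjoinRelation, adjoinFree]

theorem loc_le_adjoinFraction (P : ResidualPresentation V Ω) {r : P.σ} (hr : r ∉ P.T)
    {s G : MvPolynomial P.σ V} {t : V} {y : Ω} (hs ht ht0 hG)
    (hy : aeval P.φ (s * C t) * y = aeval P.φ G) :
    P.loc ≤ (P.adjoinFraction hr hs ht ht0 hG hy).loc := fun _ hx ↦
  map_mem_loc (AlgHom.id V Ω) some (fun i ↦ P.φ_adjoinFraction hr hs ht ht0 hG hy (some i)) hx

end ResidualPresentation

end Constructions

section ImmediateValuations

section Scalars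

variable {K Ω Γ₀ : Type*} [Field K] [CommRing Ω] [Algebra K Ω]
  [LinearOrderedCommGroupWithZero Γ₀] (w : Valuation Ω Γ₀)

theorem valuation_smul (c : K) (f : Ω) : w (c • f) = w (algebraMap K Ω c) * w f := by
  rw [Algebra.smul_def, map_mul]

theorem valuation_algebraMap_ne_zero_iff {c : K} : w (algebraMap K Ω c) ≠ 0 ↔ c ≠ 0 :=
  (w.comap (algebraMap K Ω)).ne_zero_iff

theorem valuation_inv_smul (c : K) (f : Ω) : w (c⁻¹ • f) = (w (algebraMap K Ω c))⁻¹ * w f := by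
  rw [valuation_smul]
  exact congrArg (· * w f) (map_inv₀ (w.comap (algebraMap K Ω)) c)

theorem valuation_inv_smul_le_one_iff {c : K} (hc : c ≠ 0) {f : Ω} :
    w (c⁻¹ • f) ≤ 1 ↔ w f ≤ w (algebraMap K Ω c) := by
  rw [valuation_inv_smul,
    inv_mul_le_one₀ (zero_lt_iff.mpr ((valuation_algebraMap_ne_zero_iff w).mpr hc))]

end Scalars

/-- A valuation `w` of a `K`-algebra whose residue ring and value monoid come from the valuation
ring `V` of `K`. No injectivity is required: `w` may take the value zero at nonzero elements. -/
structure IsImmediateOver (V K : Type*) {Ω Γ₀ : Type*} [CommRing V] [Field K]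
    [CommRing Ω] [Algebra V Ω] [Algebra K Ω] [LinearOrderedCommGroupWithZero Γ₀]
    (w : Valuation Ω Γ₀) : Prop where
  map_le_one (a : V) : w (algebraMap V Ω a) ≤ 1
  isUnit_of_map_eq_one (a : V) : w (algebraMap V Ω a) = 1 → IsUnit a
  exists_sub_lt (f : Ω) : w f ≤ 1 → ∃ a : V, w (f - algebraMap V Ω a) < 1
  exists_map_eq (f : Ω) : w f ≠ 0 → ∃ c : K, w (algebraMap K Ω c) = w f

namespace IsImmediateOver

variable {V K Ω Γ₀ : Type*} [CommRing V] [Field K] [CommRing Ω] [Algebra V Ω] [Algebra K Ω]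
  [LinearOrderedCommGroupWithZero Γ₀] {w : Valuation Ω Γ₀}

theorem map_eq_one_iff (hw : IsImmediateOver V K w) (a : V) :
    w (algebraMap V Ω a) = 1 ↔ IsUnit a := by
  refine ⟨hw.isUnit_of_map_eq_one a, fun ⟨u, hu⟩ ↦ le_antisymm (hw.map_le_one a) ?_⟩
  calc (1 : Γ₀) = w (algebraMap V Ω u) * w (algebraMap V Ω ↑u⁻¹) := by
        rw [← map_mul, ← map_mul, Units.mul_inv, map_one, map_one]
    _ ≤ w (algebraMap V Ω a) := hu ▸ mul_le_of_le_one_right' (hw.map_le_one _)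

theorem map_lt_one_iff [IsLocalRing V] (hw : IsImmediateOver V K w) (a : V) :
    w (algebraMap V Ω a) < 1 ↔ a ∈ maximalIdeal V := by
  rw [mem_maximalIdeal, mem_nonunits_iff, ← hw.map_eq_one_iff, lt_iff_le_and_ne]
  exact and_iff_right (hw.map_le_one a)

theorem exists_inv_smul_eq_one (hw : IsImmediateOver V K w) {f : Ω} (hf : w f ≠ 0) :
    ∃ c : K, c ≠ 0 ∧ w (algebraMap K Ω c) = w f ∧ w (c⁻¹ • f) = 1 := by
  obtain ⟨c, hc⟩ := hw.exists_map_eq f hf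
  exact ⟨c, (valuation_algebraMap_ne_zero_iff w).mp (hc ▸ hf), hc,
    by rw [valuation_inv_smul, hc, inv_mul_cancel₀ hf]⟩

theorem exists_smul_le_one (hw : IsImmediateOver V K w) (f : Ω) :
    ∃ c : K, c ≠ 0 ∧ w (c • f) ≤ 1 := by
  by_cases hf : w f = 0
  · exact ⟨1, one_ne_zero, by simp [hf]⟩
  · obtain ⟨c, hc0, -, hc⟩ := hw.exists_inv_smul_eq_one hf
    exact ⟨c⁻¹, inv_ne_zero hc0, hc.le⟩

variable [Algebra V K] [IsScalarTower V K Ω]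

theorem comap (hw : IsImmediateOver V K w) {Ω' : Type*} [CommRing Ω'] [Algebra V Ω']
    [Algebra K Ω'] [IsScalarTower V K Ω'] (f : Ω' →ₐ[K] Ω) :
    IsImmediateOver V K (w.comap (f : Ω' →+* Ω)) := by
  have hV (a : V) : f (algebraMap V Ω' a) = algebraMap V Ω a := by
    rw [IsScalarTower.algebraMap_apply V K Ω', f.commutes, ← IsScalarTower.algebraMap_apply]
  refine ⟨fun a ↦ ?_, fun a ha ↦ hw.isUnit_of_map_eq_one a ?_, fun g hg ↦ ?_, fun g hg ↦ ?_⟩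
  · simpa [hV] using hw.map_le_one a
  · simpa [hV] using ha
  · obtain ⟨a, ha⟩ := hw.exists_sub_lt (f g) hg
    exact ⟨a, by simpa [hV] using ha⟩
  · obtain ⟨c, hc⟩ := hw.exists_map_eq (f g) hg
    exact ⟨c, by simpa using hc⟩

variable [IsDomain V] [ValuationRing V] [IsFractionRing V K]

theorem exists_algebraMap_eq (hw : IsImmediateOver V K w) {c : K}
    (hc : w (algebraMap K Ω c) ≤ 1) : ∃ a : V, algebraMap V K a = c := by
  rcases ValuationRing.isInteger_or_isInteger V c with h | ⟨a, ha⟩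
  · exact h
  by_cases hc0 : c = 0
  · exact ⟨0, by simp [hc0]⟩
  have hmul : w (algebraMap V Ω a) * w (algebraMap K Ω c) = 1 := by
    rw [IsScalarTower.algebraMap_apply V K Ω, ha, ← map_mul, ← map_mul, inv_mul_cancel₀ hc0,
      map_one, map_one]
  have hone : w (algebraMap V Ω a) = 1 := le_antisymm (hw.map_le_one a) <|
    hmul.symm.trans_le (mul_le_of_le_one_right' hc)
  obtain ⟨u, rfl⟩ := hw.isUnit_of_map_eq_one a hone
  refine ⟨(u⁻¹ : Vˣ), ?_⟩
  rw [← inv_inv c, ← ha]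
  exact eq_inv_of_mul_eq_one_left (by rw [← map_mul, Units.inv_mul, map_one])

theorem exists_eq_add_mul (hw : IsImmediateOver V K w) {S : Submodule K Ω} (h1 : (1 : Ω) ∈ S)
    (hS : ∀ f ∈ S, w f = 0 → f = 0) {α : Ω} (hα : α ∈ S) (hle : w α ≤ 1) :
    ∃ e : V, ∃ ε ∈ maximalIdeal V, ∃ β ∈ S, w β ≤ 1 ∧
      α = algebraMap V Ω e + algebraMap V Ω ε * β ∧ (w α = 1 → IsUnit e) := by
  obtain ⟨e, he⟩ := hw.exists_sub_lt α hle
  have hmem : α - algebraMap V Ω e ∈ S := by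
    rw [IsScalarTower.algebraMap_apply V K Ω, Algebra.algebraMap_eq_smul_one]
    exact S.sub_mem hα (S.smul_mem _ h1)
  have hunit (h : w α = 1) : IsUnit e := by
    rw [← hw.map_eq_one_iff, ← h]
    exact w.map_eq_of_sub_lt (by rwa [Valuation.map_sub_swap, h])
  by_cases h0 : w (α - algebraMap V Ω e) = 0
  · exact ⟨e, 0, Ideal.zero_mem _, 0, S.zero_mem, by simp,
      by simpa [sub_eq_zero] using hS _ hmem h0, hunit⟩
  obtain ⟨c, hc0, hc, hone⟩ := hw.exists_inv_smul_eq_one h0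
  obtain ⟨ε, hε⟩ := hw.exists_algebraMap_eq (hc.trans_le he.le)
  refine ⟨e, ε, ?_, c⁻¹ • (α - algebraMap V Ω e), S.smul_mem _ hmem, hone.le, ?_, hunit⟩
  · rwa [← hw.map_lt_one_iff, IsScalarTower.algebraMap_apply V K Ω, hε, hc]
  · rw [IsScalarTower.algebraMap_apply V K Ω ε, hε, ← Algebra.smul_def, smul_inv_smul₀ hc0,
      add_sub_cancel]

end IsImmediateOver

namespace ResidualPresentation

section IsSmall

variable {V K Ω Γ₀ : Type*} [CommRing V] [IsLocalRing V] [Field K] [CommRing Ω] [Algebra V Ω]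
  [Algebra K Ω] [LinearOrderedCommGroupWithZero Γ₀] {w : Valuation Ω Γ₀}
  {P : ResidualPresentation V Ω}

/-- The values of a small presentation have valuation less than one, that is, they specialize to
the origin of the closed fibre. -/
def IsSmall (P : ResidualPresentation V Ω) (w : Valuation Ω Γ₀) : Prop :=
  ∀ i, w (P.φ i) < 1

theorem IsSmall.map_aeval_sub_lt (hP : P.IsSmall w) (hw : IsImmediateOver V K w)
    (p : MvPolynomial P.σ V) : w (aeval P.φ p - algebraMap V Ω (constantCoeff p)) < 1 := by
  induction p using MvPolynomial.induction_on with
  | C a => simp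
  | add p q hp hq =>
    rw [map_add, map_add, map_add, add_sub_add_comm]
    exact w.map_add_lt hp hq
  | mul_X p i hp =>
    have hle : w (aeval P.φ p) ≤ 1 := by
      rw [← sub_add_cancel (aeval P.φ p) (algebraMap V Ω (constantCoeff p))]
      exact w.map_add_le hp.le (hw.map_le_one _)
    simp only [map_mul, constantCoeff_X, mul_zero, map_zero, sub_zero, aeval_X]
    exact (mul_le_of_le_one_left' hle).trans_lt (hP i)

theorem IsSmall.map_aeval_eq_one_iff (hP : P.IsSmall w) (hw : IsImmediateOver V K w)
    (p : MvPolynomial P.σ V) : w (aeval P.φ p) = 1 ↔ IsUnit (constantCoeff p) := by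
  have h := hP.map_aeval_sub_lt hw p
  rw [← hw.map_eq_one_iff]
  constructor <;> intro h1 <;> rw [← h1]
  · exact w.map_eq_of_sub_lt (by rwa [Valuation.map_sub_swap, h1])
  · exact w.map_eq_of_sub_lt (by rwa [h1])

theorem IsSmall.mem_loc_of_mul_mem (hP : P.IsSmall w) (hw : IsImmediateOver V K w) {u z : Ω}
    (hu : u ∈ P.loc) (hu1 : w u = 1) (hz : u * z ∈ P.loc) : z ∈ P.loc := by
  obtain ⟨s, p, hs, hp⟩ := mem_loc.mp hu
  obtain ⟨t, q, ht, hq⟩ := mem_loc.mp hz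
  have hp1 : IsUnit (constantCoeff p) := by
    rw [← hP.map_aeval_eq_one_iff hw, ← hp, map_mul, hu1, mul_one]
    exact (hP.map_aeval_eq_one_iff hw s).mpr hs
  refine mem_loc.mpr ⟨p * t, s * q, by simpa using ⟨hp1, ht⟩, ?_⟩
  rw [map_mul, map_mul, ← hp, ← hq]
  ring

end IsSmall

section GenericLoc

variable {V K Ω : Type*} [CommRing V] [IsDomain V] [IsLocalRing V] [Field K] [Algebra V K]
  [IsFractionRing V K] [CommRing Ω] [Algebra V Ω] [Algebra K Ω] [IsScalarTower V K Ω]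

/-- The `K`-subalgebra generated by `loc`, written as the elements having a nonzero constant
multiple in `loc`. -/
def genericLoc (K : Type*) [Field K] [Algebra V K] [IsFractionRing V K] [Algebra K Ω]
    [IsScalarTower V K Ω] (P : ResidualPresentation V Ω) : Subalgebra K Ω where
  carrier := {x | ∃ d : V, d ≠ 0 ∧ d • x ∈ P.loc}
  mul_mem' := by
    rintro x y ⟨d, hd, hx⟩ ⟨e, he, hy⟩
    exact ⟨d * e, mul_ne_zero hd he, by rw [← smul_mul_smul_comm]; exact mul_mem hx hy⟩
  add_mem' := by
    rintro x y ⟨d, hd, hx⟩ ⟨e, he, hy⟩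
    refine ⟨d * e, mul_ne_zero hd he, ?_⟩
    rw [smul_add, mul_comm, mul_smul, mul_comm, mul_smul]
    exact add_mem (P.loc.smul_mem hx e) (P.loc.smul_mem hy d)
  algebraMap_mem' c := by
    obtain ⟨a, b, hb, rfl⟩ := IsFractionRing.div_surjective (A := V) c
    refine ⟨b, nonZeroDivisors.ne_zero hb, ?_⟩
    rw [← algebraMap_smul K b, Algebra.smul_def, ← map_mul,
      mul_div_cancel₀ _ (IsFractionRing.to_map_ne_zero_of_mem_nonZeroDivisors hb),
      ← IsScalarTower.algebraMap_apply V K Ω]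
    exact algebraMap_mem _ _

variable {P Q : ResidualPresentation V Ω}

theorem mem_genericLoc {x : Ω} : x ∈ P.genericLoc K ↔ ∃ d : V, d ≠ 0 ∧ d • x ∈ P.loc :=
  Iff.rfl

theorem mem_genericLoc_of_mem_loc {x : Ω} (hx : x ∈ P.loc) : x ∈ P.genericLoc K :=
  ⟨1, one_ne_zero, by simpa using hx⟩

theorem mem_genericLoc_of_smul_mem {x : Ω} {c : K} (hc : c ≠ 0) (hx : c • x ∈ P.genericLoc K) :
    x ∈ P.genericLoc K :=
  inv_smul_smul₀ hc x ▸ (P.genericLoc K).smul_mem hx c⁻¹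

theorem genericLoc_mono (h : P.loc ≤ Q.loc) : P.genericLoc K ≤ Q.genericLoc K :=
  fun _ ⟨d, hd, hx⟩ ↦ ⟨d, hd, h hx⟩

end GenericLoc

end ResidualPresentation

end ImmediateValuations

section Expansion

theorem exists_eq_sum_mul_pow_of_monic {R : Type*} [CommRing R] [Nontrivial R]
    {g : Polynomial R} (hg : g.Monic) (hdeg : g.natDegree ≠ 0) (f : Polynomial R) :
    ∃ (n : ℕ) (r : Fin n → Polynomial R), (∀ i, (r i).degree < g.degree) ∧
      f = ∑ i, r i * g ^ (i : ℕ) := by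
  obtain ⟨q, r, hr, hf⟩ := f.eq_quo_mul_pow_add_sum_rem_mul_pow hg (f.natDegree + 1)
  refine ⟨_, r, hr, ?_⟩
  have hpow (k : ℕ) : (g ^ k).degree = (k * g.natDegree : ℕ) := by
    rw [Polynomial.degree_eq_natDegree (hg.pow k).ne_zero, hg.natDegree_pow]
  have hsum : (∑ i, r i * g ^ (i : ℕ)).degree < (g ^ (f.natDegree + 1)).degree := by
    rw [hpow, ← Polynomial.mem_degreeLT]
    refine Submodule.sum_mem _ fun i _ ↦ Polynomial.mem_degreeLT.mpr ?_
    have hi : ((i : ℕ) + 1) * g.natDegree ≤ (f.natDegree + 1) * g.natDegree :=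
      Nat.mul_le_mul_right _ i.2
    calc (r i * g ^ (i : ℕ)).degree ≤ (r i).degree + (g ^ (i : ℕ)).degree :=
          Polynomial.degree_mul_le _ _
      _ < g.degree + (g ^ (i : ℕ)).degree := by
          rw [hpow]
          exact WithBot.add_lt_add_right WithBot.coe_ne_bot (hr i)
      _ = (((i : ℕ) + 1) * g.natDegree : ℕ) := by
          rw [hpow, Polynomial.degree_eq_natDegree hg.ne_zero]
          norm_cast
          ring
      _ ≤ ((f.natDegree + 1) * g.natDegree : ℕ) := by exact_mod_cast hi
  have hfdeg : f.degree < (g ^ (f.natDegree + 1)).degree := by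
    rw [hpow]
    refine Polynomial.degree_le_natDegree.trans_lt ?_
    exact_mod_cast (Nat.lt_succ_self _).trans_le
      (Nat.le_mul_of_pos_right _ (Nat.pos_of_ne_zero hdeg))
  have hq : q = 0 := by
    by_contra hq
    have hqg : q * g ^ (f.natDegree + 1) = f - ∑ i, r i * g ^ (i : ℕ) := eq_sub_of_add_eq hf.symm
    have hlt := (Polynomial.degree_sub_le f (∑ i, r i * g ^ (i : ℕ))).trans_lt
      (max_lt hfdeg hsum)
    rw [← hqg, (hg.pow _).degree_mul] at hlt
    exact hlt.not_ge (le_add_of_nonneg_left (Polynomial.zero_le_degree_iff.mpr hq))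
  rwa [hq, zero_mul, zero_add] at hf

section Distinguished

variable {R σ : Type*} [CommRing R] {𝔫 : Ideal R} {i : σ}

theorem IsDistinguished.mul_left [𝔫.IsPrime] {s h : MvPolynomial σ R}
    (hh : IsDistinguished 𝔫 i h) (hs : constantCoeff s ∉ 𝔫) : IsDistinguished 𝔫 i (s * h) := by
  obtain ⟨w, e, hw, hwe⟩ := hh
  refine ⟨s * w, e, ?_, ?_⟩
  · rw [map_mul]
    exact fun hsw ↦ (‹𝔫.IsPrime›.mem_or_mem hsw).elim hs hw
  · rw [mul_assoc, ← mul_sub]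
    exact Ideal.mul_mem_left _ s hwe

theorem isDistinguished_sum_C_mul_X_pow {n : ℕ} {e : Fin n → R} (he : ∃ j, e j ∉ 𝔫) :
    IsDistinguished 𝔫 i (∑ j, C (e j) * X i ^ (j : ℕ)) := by
  induction n with
  | zero => exact he.choose.elim0
  | succ n ih =>
    by_cases h0 : e 0 ∈ 𝔫
    · obtain ⟨j, hj⟩ := he
      have hj0 : j ≠ 0 := by
        rintro rfl
        exact hj h0
      obtain ⟨k, rfl⟩ := Fin.exists_succ_eq.mpr hj0
      obtain ⟨w, a, hw, hwa⟩ := ih (e := e ∘ Fin.succ) ⟨k, hj⟩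
      refine ⟨w, a + 1, hw, ?_⟩
      convert add_mem (Ideal.mem_map_of_mem C h0) (Ideal.mul_mem_right (X i) _ hwa) using 1
      simp only [Fin.sum_univ_succ, Fin.val_zero, Fin.val_succ, pow_zero, mul_one, pow_succ,
        Function.comp_apply, sub_mul, Finset.sum_mul, mul_assoc, add_sub_assoc]
    · exact ⟨∑ j, C (e j) * X i ^ (j : ℕ), 0, by simpa [Fin.sum_univ_succ] using h0, by simp⟩

end Distinguished

namespace IsImmediateOver

variable {V K Ω Γ₀ : Type*} [CommRing V] [IsDomain V] [ValuationRing V] [Field K] [Algebra V K]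
  [IsFractionRing V K] [CommRing Ω] [Algebra V Ω] [Algebra K Ω] [IsScalarTower V K Ω]
  [LinearOrderedCommGroupWithZero Γ₀]

theorem exists_inv_smul_eq_add_mul {w : Valuation Ω Γ₀} (hw : IsImmediateOver V K w)
    {S : Submodule K Ω} (h1 : (1 : Ω) ∈ S) (hS : ∀ f ∈ S, w f = 0 → f = 0) {ι : Type*} [Finite ι]
    {β : ι → Ω} (hβ : ∀ j, β j ∈ S) (hne : β ≠ 0) :
    ∃ c : K, c ≠ 0 ∧ ∃ (e ε : ι → V) (α : ι → Ω), (∃ j, IsUnit (e j)) ∧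
      (∀ j, ε j ∈ maximalIdeal V) ∧ (∀ j, α j ∈ S ∧ w (α j) ≤ 1) ∧
      ∀ j, c⁻¹ • β j = algebraMap V Ω (e j) + algebraMap V Ω (ε j) * α j := by
  obtain ⟨j₁, hj₁⟩ := Function.ne_iff.mp hne
  have : Nonempty ι := ⟨j₁⟩
  obtain ⟨j₀, hmax⟩ := Finite.exists_max fun j ↦ w (β j)
  have hj₀ : w (β j₀) ≠ 0 := fun h ↦ hj₁ (hS _ (hβ j₁) (le_zero_iff.mp (h ▸ hmax j₁)))
  obtain ⟨c, hc0, hc, hone⟩ := hw.exists_inv_smul_eq_one hj₀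
  have hle (j : ι) : w (c⁻¹ • β j) ≤ 1 := by
    rw [valuation_inv_smul_le_one_iff w hc0, hc]
    exact hmax j
  choose e ε hε α hα hα1 heq hunit using
    fun j ↦ hw.exists_eq_add_mul h1 hS (S.smul_mem c⁻¹ (hβ j)) (hle j)
  exact ⟨c, hc0, e, ε, α, ⟨j₀, hunit j₀ hone⟩, hε, fun j ↦ ⟨hα j, hα1 j⟩, heq⟩

end IsImmediateOver

variable {V K L Γ₀ : Type*} [CommRing V] [IsDomain V] [ValuationRing V] [Field K] [Algebra V K]
  [IsFractionRing V K] [Field L] [Algebra V L] [Algebra K L] [IsScalarTower V K L]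
  [LinearOrderedCommGroupWithZero Γ₀] {w : Valuation (Polynomial L) Γ₀}

/-- The polynomials of degree less than `n` and valuation at most one. -/
def integralDegreeLT (w : Valuation (Polynomial L) Γ₀) (n : ℕ) : Set (Polynomial L) :=
  {f | f.degree < n ∧ w f ≤ 1}

theorem IsImmediateOver.exists_expansion (hw : IsImmediateOver V K w) {q : Polynomial L}
    (hq : q.Monic) (hdeg : q.natDegree ≠ 0) {d : K} (hd : d ≠ 0)
    (hind : ∀ f : Polynomial L, f.degree < q.natDegree → w f = 0 → f = 0)
    {p : Polynomial L} (hp : p ≠ 0) :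
    ∃ c : K, c ≠ 0 ∧ ∃ (n : ℕ) (e ε : Fin n → V) (α : Fin n → Polynomial L), (∃ j, IsUnit (e j)) ∧
      (∀ j, ε j ∈ maximalIdeal V) ∧ (∀ j, α j ∈ integralDegreeLT w q.natDegree) ∧
      c⁻¹ • p = ∑ j, (algebraMap V (Polynomial L) (e j) +
        algebraMap V (Polynomial L) (ε j) * α j) * (d⁻¹ • q) ^ (j : ℕ) := by
  obtain ⟨n, b, hb, hpb⟩ := exists_eq_sum_mul_pow_of_monic hq hdeg p
  let S : Submodule K (Polynomial L) := (Polynomial.degreeLT L q.natDegree).restrictScalars K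
  have hS (f : Polynomial L) : f ∈ S ↔ f.degree < q.natDegree := by
    rw [Submodule.restrictScalars_mem, Polynomial.mem_degreeLT]
  have hbS (j : Fin n) : d ^ (j : ℕ) • b j ∈ S :=
    S.smul_mem _ ((hS _).mpr (Polynomial.degree_eq_natDegree hq.ne_zero ▸ hb j))
  have hterm (j : Fin n) : (d ^ (j : ℕ) • b j) * (d⁻¹ • q) ^ (j : ℕ) = b j * q ^ (j : ℕ) := by
    rw [smul_pow, smul_mul_smul_comm, ← mul_pow, mul_inv_cancel₀ hd, one_pow, one_smul]
  have hne : (fun j : Fin n ↦ d ^ (j : ℕ) • b j) ≠ 0 := fun h0 ↦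
    hp (by simp only [hpb, ← hterm, congrFun h0, Pi.zero_apply, zero_mul, Finset.sum_const_zero])
  have h1 : (1 : Polynomial L) ∈ S := by
    rw [hS, Polynomial.degree_one]
    exact_mod_cast Nat.pos_of_ne_zero hdeg
  obtain ⟨c, hc, e, ε, α, he, hε, hα, hsplit⟩ := hw.exists_inv_smul_eq_add_mul h1
    (fun f hf ↦ hind f ((hS f).mp hf)) hbS hne
  refine ⟨c, hc, n, e, ε, α, he, hε, fun j ↦ ⟨(hS _).mp (hα j).1, (hα j).2⟩, ?_⟩
  simp only [← hsplit, smul_mul_assoc, hterm, ← Finset.smul_sum, ← hpb]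

theorem ResidualPresentation.exists_isDistinguished_aeval_eq {V Ω : Type*} [CommRing V]
    [IsLocalRing V] [CommRing Ω] [Algebra V Ω] (P : ResidualPresentation V Ω) (r : P.σ) {n : ℕ}
    {e ε : Fin n → V} {α : Fin n → Ω} (he : ∃ j, IsUnit (e j)) (hε : ∀ j, ε j ∈ maximalIdeal V)
    (hα : ∀ j, α j ∈ P.loc) :
    ∃ s G : MvPolynomial P.σ V, IsUnit (constantCoeff s) ∧ IsDistinguished (maximalIdeal V) r G ∧
      aeval P.φ G = aeval P.φ s *
        ∑ j, (algebraMap V Ω (e j) + algebraMap V Ω (ε j) * α j) * P.φ r ^ (j : ℕ) := by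
  classical
  obtain ⟨s, hs, hp⟩ := exists_common_denominator (E := Finset.univ.image α) (by simpa using hα)
  choose p hp using fun j ↦ hp (α j) (Finset.mem_image_of_mem α (Finset.mem_univ j))
  refine ⟨s, s * (∑ j, C (e j) * X r ^ (j : ℕ)) + ∑ j, C (ε j) * (p j * X r ^ (j : ℕ)), hs,
    ((isDistinguished_sum_C_mul_X_pow ?_).mul_left (notMem_maximalIdeal.mpr hs)).add_right ?_, ?_⟩
  · simpa only [notMem_maximalIdeal] using he
  · exact Ideal.sum_mem _ fun j _ ↦ Ideal.mul_mem_right _ _ (Ideal.mem_map_of_mem C (hε j))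
  · simp only [map_add, map_mul, map_sum, map_pow, aeval_C, aeval_X, Finset.mul_sum, ← hp,
      ← Finset.sum_add_distrib]
    exact Finset.sum_congr rfl fun j _ ↦ by ring

/-- The free variable `r` satisfies a distinguished relation expressing `p`, up to a scalar, in
terms of the values: this is read off the expansion of `p` along the powers of `q`. -/
theorem IsImmediateOver.exists_isDistinguished_aeval_eq_smul (hw : IsImmediateOver V K w)
    {q : Polynomial L} (hq : q.Monic) (hdeg : q.natDegree ≠ 0) {d : K} (hd : d ≠ 0)
    (hind : ∀ f : Polynomial L, f.degree < q.natDegree → w f = 0 → f = 0)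
    {p : Polynomial L} (hp : p ≠ 0) :
    ∃ c : K, c ≠ 0 ∧ ∃ E : Finset (Polynomial L), (∀ f ∈ E, f ∈ integralDegreeLT w q.natDegree) ∧
      ∀ (P : ResidualPresentation V (Polynomial L)) (r : P.σ), P.φ r = d⁻¹ • q →
        (∀ f ∈ E, f ∈ P.loc) → ∃ s G : MvPolynomial P.σ V, IsUnit (constantCoeff s) ∧
          IsDistinguished (maximalIdeal V) r G ∧ aeval P.φ G = aeval P.φ s * (c⁻¹ • p) := by
  classical
  obtain ⟨c, hc, n, e, ε, α, he, hε, hα, hexp⟩ := hw.exists_expansion hq hdeg hd hind hp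
  refine ⟨c, hc, Finset.univ.image α, by simpa using hα, fun P r hr hP ↦ ?_⟩
  rw [hexp, ← hr]
  exact P.exists_isDistinguished_aeval_eq r he hε (by simpa using hP)

end Expansion

section MonicReduction

theorem degree_sub_C_coeff_mul_lt {R : Type*} [CommRing R] {n : ℕ} {f p : Polynomial R}
    (hf : f.degree < (n + 1 : ℕ)) (hp : p.Monic) (hdeg : p.natDegree = n) :
    (f - Polynomial.C (f.coeff n) * p).degree < n := by
  rw [Polynomial.degree_lt_iff_coeff_zero]
  intro k hk
  rw [Polynomial.coeff_sub, Polynomial.coeff_C_mul]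
  rcases hk.eq_or_lt with rfl | hk
  · rw [← hdeg, hp.coeff_natDegree, mul_one, sub_self]
  · rw [Polynomial.coeff_eq_zero_of_natDegree_lt (hdeg.trans_lt hk), mul_zero, sub_zero]
    exact (Polynomial.degree_lt_iff_coeff_zero _ _).mp hf k hk

theorem monic_C_inv_coeff_mul {L : Type*} [Field L] {n : ℕ} {f : Polynomial L}
    (hf : f.degree < (n + 1 : ℕ)) (hn : f.coeff n ≠ 0) :
    (Polynomial.C (f.coeff n)⁻¹ * f).Monic ∧
      (Polynomial.C (f.coeff n)⁻¹ * f).natDegree = n := by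
  have hdeg : f.natDegree = n := by
    refine le_antisymm (Polynomial.natDegree_le_iff_coeff_eq_zero.mpr fun k hk ↦ ?_)
      (Polynomial.le_natDegree_of_ne_zero hn)
    exact (Polynomial.degree_lt_iff_coeff_zero _ _).mp hf k hk
  refine ⟨?_, by rw [Polynomial.natDegree_C_mul (inv_ne_zero hn), hdeg]⟩
  rw [Polynomial.Monic, Polynomial.leadingCoeff_mul, Polynomial.leadingCoeff_C,
    Polynomial.leadingCoeff, hdeg, inv_mul_cancel₀ hn]

theorem exists_monic_forall_valuation_C_coeff_mul_le_one {L Γ₀ : Type*} [Field L]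
    [LinearOrderedCommGroupWithZero Γ₀] {w : Valuation (Polynomial L) Γ₀} {n : ℕ}
    {E : Finset (Polynomial L)} (hE : ∀ f ∈ E, f ∈ integralDegreeLT w (n + 1)) :
    ∃ p : Polynomial L, p.Monic ∧ p.natDegree = n ∧
      ∀ f ∈ E, w (Polynomial.C (f.coeff n) * p) ≤ 1 := by
  classical
  let S : Finset (Polynomial L) := insert (Polynomial.X ^ n)
    ((E.filter fun f ↦ f.coeff n ≠ 0).image fun f ↦ Polynomial.C (f.coeff n)⁻¹ * f)
  have hS : ∀ p ∈ S, p.Monic ∧ p.natDegree = n := by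
    simp only [S, Finset.forall_mem_insert, Finset.forall_mem_image, Finset.mem_filter]
    exact ⟨⟨Polynomial.monic_X_pow n, Polynomial.natDegree_X_pow n⟩,
      fun f hf ↦ monic_C_inv_coeff_mul (hE f hf.1).1 hf.2⟩
  obtain ⟨p, hp, hmin⟩ := S.exists_min_image w ⟨_, Finset.mem_insert_self _ _⟩
  refine ⟨p, (hS p hp).1, (hS p hp).2, fun f hf ↦ ?_⟩
  by_cases hn : f.coeff n = 0
  · simp [hn]
  have hle : w p ≤ w (Polynomial.C (f.coeff n)⁻¹ * f) := hmin _ <| Finset.mem_insert_of_mem <|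
    Finset.mem_image_of_mem _ (Finset.mem_filter.mpr ⟨hf, hn⟩)
  calc w (Polynomial.C (f.coeff n) * p)
      ≤ w (Polynomial.C (f.coeff n) * (Polynomial.C (f.coeff n)⁻¹ * f)) := by
        rw [map_mul w, map_mul w]
        gcongr
    _ = w f := by rw [← mul_assoc, ← Polynomial.C_mul, mul_inv_cancel₀ hn, Polynomial.C_1, one_mul]
    _ ≤ 1 := (hE f hf).2

theorem IsImmediateOver.exists_inv_smul_sub_lt {V K Ω Γ₀ : Type*} [CommRing V] [Field K]
    [Algebra V K] [CommRing Ω] [Algebra V Ω] [Algebra K Ω] [IsScalarTower V K Ω]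
    [LinearOrderedCommGroupWithZero Γ₀] {w : Valuation Ω Γ₀} (hw : IsImmediateOver V K w) {f : Ω}
    (hf : w f ≠ 0) :
    ∃ c b : K, c ≠ 0 ∧ w (algebraMap K Ω c) = w f ∧ w (c⁻¹ • (f - algebraMap K Ω b)) < 1 := by
  obtain ⟨c, hc0, hc, hone⟩ := hw.exists_inv_smul_eq_one hf
  obtain ⟨a, ha⟩ := hw.exists_sub_lt _ hone.le
  refine ⟨c, c * algebraMap V K a, hc0, hc, ?_⟩
  rwa [map_mul, ← Algebra.smul_def, smul_sub, inv_smul_smul₀ hc0, ← IsScalarTower.algebraMap_apply]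

variable {V K L Γ₀ : Type*} [CommRing V] [Field K] [Algebra V K] [Field L] [Algebra V L]
  [Algebra K L] [IsScalarTower V K L] [LinearOrderedCommGroupWithZero Γ₀]
  {w : Valuation (Polynomial L) Γ₀}

/-- The polynomial is a leading term of smallest valuation, translated by a constant. -/
theorem IsImmediateOver.exists_monic_inv_smul_lt (hw : IsImmediateOver V K w) {n : ℕ} (hn : n ≠ 0)
    (hind : ∀ f : Polynomial L, f.degree < (n + 1 : ℕ) → w f = 0 → f = 0)
    {E : Finset (Polynomial L)} (hE : ∀ f ∈ E, f ∈ integralDegreeLT w (n + 1)) :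
    ∃ (p : Polynomial L) (d : K), p.Monic ∧ p.natDegree = n ∧ d ≠ 0 ∧ w (d⁻¹ • p) < 1 ∧
      ∀ f ∈ E, w (Polynomial.C (f.coeff n) * algebraMap K (Polynomial L) d) ≤ 1 := by
  obtain ⟨p, hp, hdeg, hle⟩ := exists_monic_forall_valuation_C_coeff_mul_le_one hE
  have hwp : w p ≠ 0 := fun h ↦ hp.ne_zero <| hind p
    ((Polynomial.natDegree_lt_iff_degree_lt hp.ne_zero).mp (hdeg.trans_lt n.lt_succ_self)) h
  obtain ⟨d, b, hd0, hd, hlt⟩ := hw.exists_inv_smul_sub_lt hwp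
  rw [Polynomial.algebraMap_apply] at hlt
  refine ⟨p - Polynomial.C (algebraMap K L b), d, hp.sub_of_left ?_,
    (Polynomial.natDegree_sub_C).trans hdeg, hd0, hlt, fun f hf ↦ ?_⟩
  · refine Polynomial.degree_C_le.trans_lt (Polynomial.natDegree_pos_iff_degree_pos.mp ?_)
    exact hdeg ▸ Nat.pos_of_ne_zero hn
  · rw [map_mul, hd, ← map_mul]
    exact hle f hf

theorem IsImmediateOver.exists_monic_reduction (hw : IsImmediateOver V K w) {n : ℕ} (hn : n ≠ 0)
    (hind : ∀ f : Polynomial L, f.degree < (n + 1 : ℕ) → w f = 0 → f = 0)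
    {E : Finset (Polynomial L)} (hE : ∀ f ∈ E, f ∈ integralDegreeLT w (n + 1)) :
    ∃ (p : Polynomial L) (d : K), p.Monic ∧ p.natDegree = n ∧ d ≠ 0 ∧ w (d⁻¹ • p) < 1 ∧
      ∃ E' : Finset (Polynomial L), (∀ f ∈ E', f ∈ integralDegreeLT w n) ∧
        ∀ A : Subalgebra V (Polynomial L), d⁻¹ • p ∈ A → (∀ f ∈ E', f ∈ A) → ∀ f ∈ E, f ∈ A := by
  classical
  obtain ⟨p, d, hp, hdeg, hd, hlt, hle⟩ := hw.exists_monic_inv_smul_lt hn hind hE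
  have hmul (f : Polynomial L) : Polynomial.C (f.coeff n) * p =
      Polynomial.C (f.coeff n) * algebraMap K (Polynomial L) d * (d⁻¹ • p) := by
    rw [mul_assoc, ← Algebra.smul_def, smul_inv_smul₀ hd]
  refine ⟨p, d, hp, hdeg, hd, hlt,
    E.image (fun f ↦ Polynomial.C (f.coeff n) * algebraMap K (Polynomial L) d) ∪
      E.image fun f ↦ f - Polynomial.C (f.coeff n) * p, ?_, fun A hpA hA f hf ↦ ?_⟩
  · simp only [Finset.forall_mem_union, Finset.forall_mem_image]
    refine ⟨fun f hf ↦ ⟨?_, hle f hf⟩,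
      fun f hf ↦ ⟨degree_sub_C_coeff_mul_lt (hE f hf).1 hp hdeg, ?_⟩⟩
    · rw [Polynomial.algebraMap_apply, ← Polynomial.C_mul]
      exact Polynomial.degree_C_le.trans_lt (by exact_mod_cast Nat.pos_of_ne_zero hn)
    · refine w.map_sub_le (hE f hf).2 ?_
      rw [hmul, map_mul]
      exact mul_le_one' (hle f hf) hlt.le
  · simp only [Finset.forall_mem_union, Finset.forall_mem_image] at hA
    rw [← sub_add_cancel f (Polynomial.C (f.coeff n) * p), hmul]
    exact add_mem (hmul f ▸ hA.2 hf) (mul_mem (hA.1 hf) hpA)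

end MonicReduction

section Covers

/-- Finitely many elements of valuation at most one always lie in the `loc` of some small
presentation. -/
def HasSmallPresentations (V : Type*) {Ω Γ₀ : Type*} [CommRing V] [IsLocalRing V] [CommRing Ω]
    [Algebra V Ω] [LinearOrderedCommGroupWithZero Γ₀] (w : Valuation Ω Γ₀) : Prop :=
  ∀ E : Finset Ω, (∀ x ∈ E, w x ≤ 1) →
    ∃ P : ResidualPresentation V Ω, P.IsSmall w ∧ ∀ x ∈ E, x ∈ P.loc

section Definitions

variable {V K L Γ₀ : Type*} [CommRing V] [IsDomain V] [IsLocalRing V] [Field K] [Algebra V K]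
  [IsFractionRing V K] [Field L] [Algebra V L] [Algebra K L] [IsScalarTower V K L]
  [LinearOrderedCommGroupWithZero Γ₀] {w : Valuation (Polynomial L) Γ₀}

namespace ResidualPresentation

/-- The variable of the polynomial ring and all the coefficients of the values are available up to
constants. -/
structure HasCoeffs (K : Type*) [Field K] [Algebra V K] [IsFractionRing V K] [Algebra K L]
    [IsScalarTower V K L] (P : ResidualPresentation V (Polynomial L)) : Prop where
  X_mem : Polynomial.X ∈ P.genericLoc K
  C_coeff_mem (i k) : Polynomial.C ((P.φ i).coeff k) ∈ P.genericLoc K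

/-- A small presentation in which the variable `r` is free and has value `y`. -/
structure IsAdapted (K : Type*) [Field K] [Algebra V K] [IsFractionRing V K] [Algebra K L]
    [IsScalarTower V K L] (w : Valuation (Polynomial L) Γ₀)
    (P : ResidualPresentation V (Polynomial L)) (r : P.σ) (y : Polynomial L) : Prop
    extends P.HasCoeffs K where
  isSmall : P.IsSmall w
  notMem : r ∉ P.T
  φ_eq : P.φ r = y

variable {P : ResidualPresentation V (Polynomial L)}

theorem C_coeff_smul_mem_genericLoc {p : Polynomial L} {k : ℕ}
    (hp : Polynomial.C (p.coeff k) ∈ P.genericLoc K) (c : K) :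
    Polynomial.C ((c • p).coeff k) ∈ P.genericLoc K := by
  rw [Polynomial.coeff_smul, ← Polynomial.smul_C]
  exact (P.genericLoc K).smul_mem hp c

theorem C_coeff_C_mem_genericLoc {a : L} (ha : Polynomial.C a ∈ P.genericLoc K) (k : ℕ) :
    Polynomial.C ((Polynomial.C a).coeff k) ∈ P.genericLoc K := by
  rw [Polynomial.coeff_C]
  split_ifs
  · exact ha
  · rw [Polynomial.C_0]
    exact zero_mem _

theorem X_mem_genericLoc_of_natDegree_eq_one {p : Polynomial L} (hp : p.Monic)
    (hdeg : p.natDegree = 1) (hmem : p ∈ P.genericLoc K)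
    (hcoeff : Polynomial.C (p.coeff 0) ∈ P.genericLoc K) :
    (Polynomial.X : Polynomial L) ∈ P.genericLoc K := by
  rw [hp.eq_X_add_C hdeg] at hmem
  exact (add_mem_cancel_right hcoeff).mp hmem

end ResidualPresentation

open ResidualPresentation

variable (V K w) in
/-- The polynomials of degree less than `n` are captured by adapted presentations whose free
variable is a scalar multiple of a monic polynomial of degree `m`. This polynomial is chosen first:
further polynomials of degree less than `m` may then be captured as well. -/
def Covers (m n : ℕ) : Prop :=
  ∀ E : Finset (Polynomial L), (∀ f ∈ E, f ∈ integralDegreeLT w n) →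
    ∃ (q : Polynomial L) (d : K), q.Monic ∧ q.natDegree = m ∧ d ≠ 0 ∧
      ∀ E' : Finset (Polynomial L), (∀ f ∈ E', f ∈ integralDegreeLT w m) →
        ∃ (P : ResidualPresentation V (Polynomial L)) (r : P.σ),
          P.IsAdapted K w r (d⁻¹ • q) ∧ (∀ f ∈ E, f ∈ P.loc) ∧ ∀ f ∈ E', f ∈ P.loc

end Definitions

open ResidualPresentation

variable {V K L Γ₀ : Type*} [CommRing V] [IsDomain V] [ValuationRing V] [Field K] [Algebra V K]
  [IsFractionRing V K] [Field L] [Algebra V L] [Algebra K L] [IsScalarTower V K L]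
  [LinearOrderedCommGroupWithZero Γ₀] {w : Valuation (Polynomial L) Γ₀}

theorem eq_C_of_mem_integralDegreeLT_one {f : Polynomial L} (hf : f ∈ integralDegreeLT w 1) :
    f = Polynomial.C (f.coeff 0) :=
  Polynomial.eq_C_of_degree_le_zero (Nat.WithBot.lt_one_iff_le_zero.mp (by simpa using hf.1))

theorem IsImmediateOver.exists_forall_C_coeff_mem_genericLoc (hw : IsImmediateOver V K w) {n : ℕ}
    (hn : n ≠ 0) (p : Polynomial L) :
    ∃ E : Finset (Polynomial L), (∀ f ∈ E, f ∈ integralDegreeLT w n) ∧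
      ∀ P : ResidualPresentation V (Polynomial L), (∀ f ∈ E, f ∈ P.loc) →
        ∀ k, Polynomial.C (p.coeff k) ∈ P.genericLoc K := by
  classical
  choose c hc hc1 using fun k ↦ hw.exists_smul_le_one (Polynomial.C (p.coeff k))
  refine ⟨p.support.image fun k ↦ c k • Polynomial.C (p.coeff k), ?_, fun P hP k ↦ ?_⟩
  · simp only [Finset.forall_mem_image]
    refine fun k _ ↦ ⟨?_, hc1 k⟩
    rw [Polynomial.smul_C]
    exact Polynomial.degree_C_le.trans_lt (by exact_mod_cast Nat.pos_of_ne_zero hn)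
  · by_cases hk : k ∈ p.support
    · exact mem_genericLoc_of_smul_mem (hc k)
        (mem_genericLoc_of_mem_loc (hP _ (Finset.mem_image_of_mem _ hk)))
    · rw [Polynomial.notMem_support_iff.mp hk, Polynomial.C_0]
      exact zero_mem _

theorem IsImmediateOver.exists_isAdapted_of_natDegree_eq_one (hw : IsImmediateOver V K w)
    (hL : HasSmallPresentations V (w.comap (Polynomial.C : L →+* Polynomial L)))
    {p : Polynomial L} (hp : p.Monic) (hdeg : p.natDegree = 1) {d : K} (hd : d ≠ 0)
    (hlt : w (d⁻¹ • p) < 1) {E : Finset (Polynomial L)}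
    (hE : ∀ f ∈ E, f ∈ integralDegreeLT w 1) :
    ∃ (P : ResidualPresentation V (Polynomial L)) (r : P.σ), P.IsAdapted K w r (d⁻¹ • p) ∧
      ∀ f ∈ E, f ∈ P.loc := by
  classical
  obtain ⟨E₁, hE₁, hcoeff⟩ := hw.exists_forall_C_coeff_mem_genericLoc one_ne_zero p
  have hEE₁ : ∀ f ∈ E ∪ E₁, f ∈ integralDegreeLT w 1 := Finset.forall_mem_union.mpr ⟨hE, hE₁⟩
  obtain ⟨P, hPs, hP⟩ := hL ((E ∪ E₁).image (Polynomial.coeff · 0)) <|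
    Finset.forall_mem_image.mpr fun f hf ↦ by
      rw [Valuation.comap_apply, ← eq_C_of_mem_integralDegreeLT_one (hEE₁ f hf)]
      exact (hEE₁ f hf).2
  have hy : (d⁻¹ • p).natDegree ≠ 0 := by
    rw [Polynomial.natDegree_smul p (inv_ne_zero hd), hdeg]
    exact one_ne_zero
  let Q := P.adjoinFree (d⁻¹ • p) <| Polynomial.transcendental _ hy <|
    mem_nonZeroDivisors_of_ne_zero <| Polynomial.leadingCoeff_ne_zero.mpr <|
    Polynomial.ne_zero_of_natDegree_gt (Nat.pos_of_ne_zero hy)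
  have hQ : ∀ f ∈ E ∪ E₁, f ∈ Q.loc := fun f hf ↦ by
    rw [eq_C_of_mem_integralDegreeLT_one (hEE₁ f hf)]
    exact map_mem_loc (IsScalarTower.toAlgHom V L (Polynomial L)) some (fun _ ↦ rfl)
      (hP _ (Finset.mem_image_of_mem _ hf))
  have hcp := hcoeff Q (Finset.forall_mem_union.mp hQ).2
  have hpQ : p ∈ Q.genericLoc K := mem_genericLoc_of_smul_mem (inv_ne_zero hd)
    (mem_genericLoc_of_mem_loc (φ_mem_loc (P := Q) (none : Option P.σ)))
  refine ⟨Q, (none : Option P.σ), ⟨⟨X_mem_genericLoc_of_natDegree_eq_one hp hdeg hpQ (hcp 0), ?_⟩,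
    ?_, ?_, rfl⟩, (Finset.forall_mem_union.mp hQ).1⟩
  · rintro (_ | i) k
    · exact C_coeff_smul_mem_genericLoc (hcp k) _
    · exact C_coeff_C_mem_genericLoc
        (mem_genericLoc_of_mem_loc (φ_mem_loc (P := Q) (some i : Option P.σ))) k
  · rintro (_ | i)
    · exact hlt
    · exact hPs i
  · rintro ⟨i, -, hi⟩
    exact Option.some_ne_none i hi

section Fractions

variable {P : ResidualPresentation V (Polynomial L)} {r : P.σ} {y p : Polynomial L} {c d : K}

theorem IsImmediateOver.inv_smul_mem_of_le (hw : IsImmediateOver V K w)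
    {A : Subalgebra V (Polynomial L)} (hc : c ≠ 0) (hd : d ≠ 0)
    (hcd : w (algebraMap K _ c) ≤ w (algebraMap K _ d)) (hp : c⁻¹ • p ∈ A) : d⁻¹ • p ∈ A := by
  obtain ⟨t, ht⟩ := hw.exists_algebraMap_eq (c := d⁻¹ * c) <| by
    rwa [map_mul, ← Algebra.smul_def, valuation_inv_smul_le_one_iff w hd]
  convert A.smul_mem hp t using 1
  rw [← algebraMap_smul K t, ht, mul_smul, smul_inv_smul₀ hc]

theorem ResidualPresentation.IsAdapted.exists_of_isDistinguished_of_lt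
    (hP : P.IsAdapted K w r y) (hw : IsImmediateOver V K w) (hc : c ≠ 0) (hd : d ≠ 0)
    (hlt : w (d⁻¹ • p) < 1) (hdc : w (algebraMap K _ d) < w (algebraMap K _ c))
    (hcoeff : ∀ k, Polynomial.C (p.coeff k) ∈ P.genericLoc K) {s G : MvPolynomial P.σ V}
    (hs : IsUnit (constantCoeff s)) (hG : IsDistinguished (maximalIdeal V) r G)
    (hGp : aeval P.φ G = aeval P.φ s * (c⁻¹ • p)) :
    ∃ (Q : ResidualPresentation V (Polynomial L)) (r' : Q.σ), Q.IsAdapted K w r' (d⁻¹ • p) ∧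
      P.loc ≤ Q.loc := by
  have hdc' : w (algebraMap K (Polynomial L) (c⁻¹ * d)) < 1 := by
    rw [map_mul, ← Algebra.smul_def, valuation_inv_smul,
      inv_mul_lt_one₀ (zero_lt_iff.mpr ((valuation_algebraMap_ne_zero_iff w).mpr hc))]
    exact hdc
  obtain ⟨t, ht⟩ := hw.exists_algebraMap_eq hdc'.le
  have htm : t ∈ maximalIdeal V := by
    rwa [← hw.map_lt_one_iff, IsScalarTower.algebraMap_apply V K (Polynomial L), ht]
  have ht0 : t ≠ 0 := by
    rintro rfl
    exact mul_ne_zero (inv_ne_zero hc) hd (by rw [← ht, map_zero])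
  have hy : aeval P.φ (s * C t) * (d⁻¹ • p) = aeval P.φ G := by
    rw [hGp, map_mul, aeval_C, mul_assoc, IsScalarTower.algebraMap_apply V K (Polynomial L), ht,
      ← Algebra.smul_def, mul_smul, smul_inv_smul₀ hd]
  have hφ := P.φ_adjoinFraction hP.notMem hs htm ht0 hG hy
  have hPQ := P.loc_le_adjoinFraction hP.notMem hs htm ht0 hG hy
  refine ⟨P.adjoinFraction hP.notMem hs htm ht0 hG hy, (none : Option P.σ),
    ⟨⟨genericLoc_mono hPQ hP.X_mem, ?_⟩, ?_, ?_, hφ none⟩, hPQ⟩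
  · intro (k : Option P.σ) j
    rw [hφ k]
    rcases k with _ | i
    · exact C_coeff_smul_mem_genericLoc (genericLoc_mono hPQ (hcoeff j)) _
    · exact genericLoc_mono hPQ (hP.C_coeff_mem i j)
  · intro (k : Option P.σ)
    rw [hφ k]
    rcases k with _ | i
    · exact hlt
    · exact hP.isSmall i
  · rintro (h | ⟨i, -, h⟩)
    · exact Option.some_ne_none r h.symm
    · exact Option.some_ne_none i h

end Fractions

theorem IsImmediateOver.covers_one_two (hw : IsImmediateOver V K w)
    (hind : ∀ f : Polynomial L, f.degree < (2 : ℕ) → w f = 0 → f = 0)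
    (hL : HasSmallPresentations V (w.comap (Polynomial.C : L →+* Polynomial L))) :
    Covers V K w 1 2 := by
  classical
  intro E hE
  obtain ⟨p, d, hp, hdeg, hd, hlt, E₁, hE₁, hgen⟩ :=
    hw.exists_monic_reduction one_ne_zero hind hE
  refine ⟨p, d, hp, hdeg, hd, fun E' hE' ↦ ?_⟩
  obtain ⟨P, r, hP, hloc⟩ := hw.exists_isAdapted_of_natDegree_eq_one hL hp hdeg hd hlt
    (Finset.forall_mem_union.mpr ⟨hE₁, hE'⟩)
  obtain ⟨hloc₁, hloc'⟩ := Finset.forall_mem_union.mp hloc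
  exact ⟨P, r, hP, hgen P.loc (hP.φ_eq ▸ φ_mem_loc r) hloc₁, hloc'⟩

/-- If the polynomials of degree at most `n` cannot all be covered by the free variable at hand,
then the relation expressing the new leading polynomial allows to divide by a nonunit, and the
quotient becomes the free variable. -/
theorem Covers.succ_or_covers_succ {m n : ℕ} (h : Covers V K w m n) (hw : IsImmediateOver V K w)
    (hm : m ≠ 0) (hmn : m < n)
    (hind : ∀ f : Polynomial L, f.degree < (n + 1 : ℕ) → w f = 0 → f = 0) :
    Covers V K w m (n + 1) ∨ Covers V K w n (n + 1) := by
  classical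
  have hn : n ≠ 0 := Nat.ne_zero_of_lt hmn
  refine or_iff_not_imp_left.mpr fun hnot ↦ ?_
  rw [Covers] at hnot
  push Not at hnot
  obtain ⟨E₁, hE₁, hnot⟩ := hnot
  intro E hE
  obtain ⟨p, d, hp, hdeg, hd, hlt, E₂, hE₂, hgen⟩ :=
    hw.exists_monic_reduction hn hind (Finset.forall_mem_union.mpr ⟨hE, hE₁⟩)
  refine ⟨p, d, hp, hdeg, hd, fun E' hE' ↦ ?_⟩
  obtain ⟨E₃, hE₃, hcoeff⟩ := hw.exists_forall_C_coeff_mem_genericLoc hn p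
  obtain ⟨q, d', hq, rfl, hd', hcov⟩ := h (E₂ ∪ (E' ∪ E₃))
    (Finset.forall_mem_union.mpr ⟨hE₂, Finset.forall_mem_union.mpr ⟨hE', hE₃⟩⟩)
  obtain ⟨E₄, hE₄, hnot⟩ := hnot q d' hq rfl hd'
  obtain ⟨c, hc, E₅, hE₅, hrel⟩ := hw.exists_isDistinguished_aeval_eq_smul hq hm hd'
    (fun f hf ↦ hind f (hf.trans (by exact_mod_cast hmn.trans n.lt_succ_self))) hp.ne_zero
  obtain ⟨P, r, hP, hloc, hloc₄₅⟩ := hcov (E₄ ∪ E₅) (Finset.forall_mem_union.mpr ⟨hE₄, hE₅⟩)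
  simp only [Finset.forall_mem_union] at hloc hloc₄₅ hgen
  obtain ⟨s, G, hs, hG, hGp⟩ := hrel P r hP.φ_eq hloc₄₅.2
  rcases le_or_gt (w (algebraMap K _ c)) (w (algebraMap K _ d)) with hcd | hdc
  · have hdp : d⁻¹ • p ∈ P.loc :=
      hw.inv_smul_mem_of_le hc hd hcd (mem_loc.mpr ⟨s, G, hs, hGp.symm⟩)
    obtain ⟨f, hf, hfloc⟩ := hnot P r hP (hgen P.loc hdp hloc.1).2
    exact absurd (hloc₄₅.1 f hf) hfloc
  · obtain ⟨Q, r', hQ, hPQ⟩ :=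
      hP.exists_of_isDistinguished_of_lt hw hc hd hlt hdc (hcoeff P hloc.2.2) hs hG hGp
    have hdp : d⁻¹ • p ∈ Q.loc := hQ.φ_eq ▸ φ_mem_loc r'
    exact ⟨Q, r', hQ, (hgen Q.loc hdp fun f hf ↦ hPQ (hloc.1 f hf)).1,
      fun f hf ↦ hPQ (hloc.2.1 f hf)⟩

theorem IsImmediateOver.exists_covers (hw : IsImmediateOver V K w)
    (hL : HasSmallPresentations V (w.comap (Polynomial.C : L →+* Polynomial L))) {n : ℕ}
    (hn : 2 ≤ n) (hind : ∀ f : Polynomial L, f.degree < n → w f = 0 → f = 0) :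
    ∃ m, m ≠ 0 ∧ m < n ∧ Covers V K w m n := by
  induction n, hn using Nat.le_induction with
  | base => exact ⟨1, one_ne_zero, one_lt_two, hw.covers_one_two hind hL⟩
  | succ n _ ih =>
    obtain ⟨m, hm, hmn, h⟩ := ih fun f hf ↦ hind f (hf.trans (by exact_mod_cast n.lt_succ_self))
    rcases h.succ_or_covers_succ hw hm hmn hind with h | h
    · exact ⟨m, hm, hmn.trans n.lt_succ_self, h⟩
    · exact ⟨n, Nat.ne_zero_of_lt hmn, n.lt_succ_self, h⟩

end Covers

section SimpleExtensions

theorem mem_lifts_of_monic_mul_mem {R S : Type*} [CommRing R] [CommRing S] [Nontrivial S]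
    {f : R →+* S}
    {F b : Polynomial S} (hF : F.Monic) (hFf : F ∈ Polynomial.lifts f)
    (hFb : F * b ∈ Polynomial.lifts f) : b ∈ Polynomial.lifts f := by
  obtain ⟨p, hp⟩ := (Polynomial.mem_lifts _).mp hFb
  obtain ⟨G, hG, -, hGm⟩ := Polynomial.lifts_and_degree_eq_and_monic hFf hF
  refine (Polynomial.mem_lifts _).mpr ⟨p /ₘ G, ?_⟩
  rw [Polynomial.map_divByMonic _ hGm, hp, hG, Polynomial.mul_divByMonic_cancel_left _ hF]

section Quotients

variable {V K L : Type*} [CommRing V] [IsDomain V] [IsLocalRing V] [Field K] [Algebra V K]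
  [IsFractionRing V K] [Field L] [Algebra V L] [Algebra K L] [IsScalarTower V K L]

namespace ResidualPresentation.HasCoeffs

variable {P : ResidualPresentation V (Polynomial L)} {p : MvPolynomial P.σ V} {F : Polynomial L}

theorem aeval_mem_lifts (hP : P.HasCoeffs K) (p : MvPolynomial P.σ V) :
    aeval P.φ p ∈
      Polynomial.lifts ((P.genericLoc K).toSubring.comap Polynomial.C).subtype := by
  have hlift {f : Polynomial L} (hf : ∀ k, Polynomial.C (f.coeff k) ∈ P.genericLoc K) :
      f ∈ Polynomial.lifts ((P.genericLoc K).toSubring.comap Polynomial.C).subtype :=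
    (Polynomial.lifts_iff_coeff_lifts _).mpr fun k ↦ ⟨⟨f.coeff k, hf k⟩, rfl⟩
  induction p using MvPolynomial.induction_on with
  | C a =>
    rw [aeval_C, IsScalarTower.algebraMap_apply V L (Polynomial L), Polynomial.algebraMap_eq]
    exact hlift (C_coeff_C_mem_genericLoc (mem_genericLoc_of_mem_loc (P.loc.algebraMap_mem a)))
  | add p q hp hq =>
    rw [map_add]
    exact add_mem hp hq
  | mul_X p i hp =>
    rw [map_mul, aeval_X]
    exact mul_mem hp (hlift (hP.C_coeff_mem i))

theorem mem_genericLoc_of_mem_lifts (hP : P.HasCoeffs K)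
    (hF : F ∈ Polynomial.lifts ((P.genericLoc K).toSubring.comap Polynomial.C).subtype) :
    F ∈ P.genericLoc K := by
  rw [F.as_sum_support_C_mul_X_pow]
  refine sum_mem fun k _ ↦ mul_mem ?_ (pow_mem hP.X_mem k)
  obtain ⟨a, ha⟩ := (Polynomial.lifts_iff_coeff_lifts _).mp hF k
  exact ha ▸ a.2

theorem exists_aeval_eq_of_dvd (hP : P.HasCoeffs K) (hF : F.Monic)
    (hFc : ∀ k, Polynomial.C (F.coeff k) ∈ P.genericLoc K) {c : K} (hc : c ≠ 0)
    {s G : MvPolynomial P.σ V} (hs : IsUnit (constantCoeff s))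
    (hG : aeval P.φ G = aeval P.φ s * (c⁻¹ • F)) (hp : F ∣ aeval P.φ p) :
    ∃ d ≠ 0, ∃ s' q : MvPolynomial P.σ V, IsUnit (constantCoeff s') ∧
      aeval P.φ (C d * s' * p) = aeval P.φ (G * q) := by
  obtain ⟨b, hb⟩ := hp
  have hb_mem : b ∈ P.genericLoc K := hP.mem_genericLoc_of_mem_lifts <|
    mem_lifts_of_monic_mul_mem hF
      ((Polynomial.lifts_iff_coeff_lifts _).mpr fun k ↦ ⟨⟨F.coeff k, hFc k⟩, rfl⟩)
      (hb ▸ hP.aeval_mem_lifts p)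
  obtain ⟨d, hd, hdb⟩ := mem_genericLoc.mp ((P.genericLoc K).smul_mem hb_mem c)
  obtain ⟨t, q, ht, hq⟩ := mem_loc.mp hdb
  refine ⟨d, hd, s * t, q, by simpa using ⟨hs, ht⟩, ?_⟩
  calc aeval P.φ (C d * (s * t) * p)
      = algebraMap V _ d * (aeval P.φ s * aeval P.φ t) * (F * b) := by
        rw [map_mul, map_mul, map_mul, aeval_C, hb]
    _ = algebraMap V _ d * (aeval P.φ s * aeval P.φ t) * ((c⁻¹ • F) * (c • b)) := by
        rw [smul_mul_smul_comm, inv_mul_cancel₀ hc, one_smul]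
    _ = aeval P.φ (G * q) := by
        rw [map_mul, hG, ← hq, Algebra.smul_def d]
        ring

end ResidualPresentation.HasCoeffs

end Quotients

open IntermediateField ResidualPresentation

theorem HasSmallPresentations.of_bijective {V Ω Ω' Γ₀ : Type*} [CommRing V] [IsLocalRing V]
    [CommRing Ω] [Algebra V Ω] [CommRing Ω'] [Algebra V Ω'] [LinearOrderedCommGroupWithZero Γ₀]
    {v : Valuation Ω' Γ₀} {f : Ω →ₐ[V] Ω'} (hf : Function.Bijective f)
    (h : HasSmallPresentations V (v.comap (f : Ω →+* Ω'))) : HasSmallPresentations V v := by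
  classical
  intro E hE
  obtain ⟨g, hg⟩ := hf.surjective.hasRightInverse
  obtain ⟨P, hPs, hP⟩ := h (E.image g) <| Finset.forall_mem_image.mpr fun z hz ↦
    (congrArg v (hg z)).trans_le (hE z hz)
  exact ⟨P.map f hf.injective, hPs, fun z hz ↦ hg z ▸
    map_mem_loc (Q := P.map f hf.injective) f id (fun _ ↦ rfl)
      (hP _ (Finset.mem_image_of_mem g hz))⟩

section Adjoin

variable {K L M Γ₀ : Type*} [Field L] [Field M] [Algebra L M] {x z : M}

theorem exists_degree_lt_minpoly_aeval_eq (hx : IsIntegral L x) (hz : z ∈ L⟮x⟯) :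
    ∃ f : Polynomial L, f.degree < (minpoly L x).natDegree ∧ Polynomial.aeval x f = z := by
  have hz' : z ∈ Algebra.adjoin L {x} := by
    rwa [← adjoin_simple_toSubalgebra_of_isAlgebraic hx.isAlgebraic]
  rw [Algebra.adjoin_singleton_eq_range_aeval] at hz'
  obtain ⟨f, rfl⟩ := hz'
  refine ⟨f %ₘ minpoly L x, ?_, minpoly.aeval_modByMonic_minpoly f x⟩
  rw [← Polynomial.degree_eq_natDegree (minpoly.ne_zero hx)]
  exact Polynomial.degree_modByMonic_lt f (minpoly.monic hx)

variable [Field K] [Algebra K L] [Algebra K M] [IsScalarTower K L M]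
  [LinearOrderedCommGroupWithZero Γ₀]

theorem IsImmediateOver.exists_aeval_mul_eq_aeval {V : Type*} [CommRing V] [Algebra V M]
    {v : Valuation M Γ₀} (hv : IsImmediateOver V K v) (hz : z ∈ L⟮x⟯) : ∃ f u : Polynomial L,
      v (Polynomial.aeval x u) = 1 ∧ Polynomial.aeval x u * z = Polynomial.aeval x f := by
  obtain ⟨f, g, rfl⟩ := (mem_adjoin_simple_iff L z).mp hz
  by_cases hg : Polynomial.aeval x g = 0
  · exact ⟨0, 1, by simp, by simp [hg]⟩
  obtain ⟨c, -, -, hc⟩ := hv.exists_inv_smul_eq_one (v.ne_zero_iff.mpr hg)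
  have hsmul (p : Polynomial L) : Polynomial.aeval x (c⁻¹ • p) = c⁻¹ • Polynomial.aeval x p :=
    map_smul ((Polynomial.aeval x).restrictScalars K) c⁻¹ p
  refine ⟨c⁻¹ • f, c⁻¹ • g, by rw [hsmul, hc], ?_⟩
  rw [hsmul, hsmul, smul_mul_assoc, mul_div_cancel₀ _ hg]

theorem comap_aeval_comap_C (v : Valuation M Γ₀) (x : M) :
    (v.comap (((Polynomial.aeval x).restrictScalars K : Polynomial L →ₐ[K] M) :
      Polynomial L →+* M)).comap Polynomial.C = v.comap (algebraMap L M) := by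
  ext e
  simp

end Adjoin

variable {V K L M Γ₀ : Type*} [CommRing V] [IsDomain V] [ValuationRing V] [Field K] [Algebra V K]
  [IsFractionRing V K] [Field L] [Algebra V L] [Algebra K L] [IsScalarTower V K L] [Field M]
  [Algebra V M] [Algebra K M] [Algebra L M] [IsScalarTower V K M] [IsScalarTower V L M]
  [IsScalarTower K L M] [LinearOrderedCommGroupWithZero Γ₀] {v : Valuation M Γ₀} {x : M}

theorem HasSmallPresentations.of_transcendental (hv : IsImmediateOver V K v)
    (hL : HasSmallPresentations V (v.comap (algebraMap L M))) (hx : Transcendental L x)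
    (htop : L⟮x⟯ = ⊤) : HasSmallPresentations V v := by
  classical
  intro E hE
  have hinj : Function.Injective (Polynomial.aeval x : Polynomial L →ₐ[L] M) :=
    transcendental_iff_injective.mp hx
  let ev : Polynomial L →ₐ[V] M := (Polynomial.aeval x).restrictScalars V
  choose f u hu hfu using fun z : M ↦ hv.exists_aeval_mul_eq_aeval (htop ▸ mem_top : z ∈ L⟮x⟯)
  have hf (z : M) (hz : z ∈ E) : v (Polynomial.aeval x (f z)) ≤ 1 := by
    rw [← hfu, map_mul, hu, one_mul]
    exact hE z hz
  let E₀ : Finset (Polynomial L) := E.image f ∪ E.image u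
  have hdeg (p : Polynomial L) (hp : p ∈ E₀) :
      p.degree < (E₀.sup Polynomial.natDegree + 2 : ℕ) := by
    refine Polynomial.degree_le_natDegree.trans_lt ?_
    exact_mod_cast (Finset.le_sup hp).trans_lt (Nat.lt_add_of_pos_right two_pos)
  have hw := hv.comap ((Polynomial.aeval x).restrictScalars K : Polynomial L →ₐ[K] M)
  obtain ⟨m, -, -, hcov⟩ := hw.exists_covers (by rwa [comap_aeval_comap_C])
    (Nat.le_add_left 2 (E₀.sup Polynomial.natDegree))
    fun p _ hp ↦ (map_eq_zero_iff _ hinj).mp (v.zero_iff.mp hp)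
  obtain ⟨q, d, -, -, -, hq⟩ := hcov E₀ fun p hp ↦ ⟨hdeg p hp, by
    rcases Finset.mem_union.mp hp with hp | hp <;> obtain ⟨z, hz, rfl⟩ := Finset.mem_image.mp hp
    · exact hf z hz
    · exact (hu z).le⟩
  obtain ⟨P, r, hP, hloc, -⟩ := hq ∅ (by simp)
  have hsmall : (P.map ev hinj).IsSmall v := hP.isSmall
  have hmap {p : Polynomial L} (hp : p ∈ E₀) : ev p ∈ (P.map ev hinj).loc :=
    map_mem_loc (Q := P.map ev hinj) ev id (fun _ ↦ rfl) (hloc p hp)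
  refine ⟨P.map ev hinj, hsmall, fun z hz ↦ hsmall.mem_loc_of_mul_mem hv
    (hmap (Finset.mem_union_right _ (Finset.mem_image_of_mem u hz))) (hu z) ?_⟩
  exact (hfu z).symm ▸ hmap (Finset.mem_union_left _ (Finset.mem_image_of_mem f hz))

theorem HasSmallPresentations.of_two_le_natDegree_minpoly (hv : IsImmediateOver V K v)
    (hL : HasSmallPresentations V (v.comap (algebraMap L M))) (hx : IsIntegral L x)
    (hdeg : 2 ≤ (minpoly L x).natDegree) (htop : L⟮x⟯ = ⊤) : HasSmallPresentations V v := by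
  classical
  intro E hE
  have hF := minpoly.monic hx
  let ev : Polynomial L →ₐ[V] M := (Polynomial.aeval x).restrictScalars V
  choose f hfdeg hf using fun z : M ↦
    exists_degree_lt_minpoly_aeval_eq hx (htop ▸ mem_top : z ∈ L⟮x⟯)
  have hw := hv.comap ((Polynomial.aeval x).restrictScalars K : Polynomial L →ₐ[K] M)
  have hind (p : Polynomial L) (hp : p.degree < (minpoly L x).natDegree)
      (hp0 : v (Polynomial.aeval x p) = 0) : p = 0 := by
    by_contra hne
    rw [← Polynomial.degree_eq_natDegree hF.ne_zero] at hp
    exact (minpoly.degree_le_of_ne_zero L x hne (v.zero_iff.mp hp0)).not_gt hp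
  obtain ⟨m, hm, hmdeg, hcov⟩ := hw.exists_covers (by rwa [comap_aeval_comap_C]) hdeg hind
  obtain ⟨E₁, hE₁, hcoeff⟩ :=
    hw.exists_forall_C_coeff_mem_genericLoc (Nat.ne_zero_of_lt hmdeg) (minpoly L x)
  obtain ⟨q, d, hq, rfl, hd, hqcov⟩ := hcov (E.image f ∪ E₁) <|
    Finset.forall_mem_union.mpr ⟨Finset.forall_mem_image.mpr fun z hz ↦
      ⟨hfdeg z, (congrArg v (hf z)).trans_le (hE z hz)⟩, hE₁⟩
  obtain ⟨c, hc, E₂, hE₂, hrel⟩ := hw.exists_isDistinguished_aeval_eq_smul hq hm hd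
    (fun p hp ↦ hind p (hp.trans (by exact_mod_cast hmdeg))) hF.ne_zero
  obtain ⟨P, r, hP, hloc, hloc₂⟩ := hqcov E₂ hE₂
  rw [Finset.forall_mem_union, Finset.forall_mem_image] at hloc
  obtain ⟨s, G, hs, hG, hGF⟩ := hrel P r hP.φ_eq hloc₂
  have hevG : ev (aeval P.φ G) = 0 := by
    rw [hGF, map_mul]
    refine mul_eq_zero_of_right _ ?_
    change (Polynomial.aeval x).restrictScalars K (c⁻¹ • minpoly L x) = 0
    rw [map_smul, AlgHom.restrictScalars_apply, minpoly.aeval, smul_zero]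
  refine ⟨P.adjoinRelation hP.notMem ev hG hevG fun p hp ↦ hP.exists_aeval_eq_of_dvd hF
    (hcoeff P hloc.2) hc hs hGF (minpoly.dvd L x hp), hP.isSmall, fun z hz ↦ ?_⟩
  exact hf z ▸ P.map_mem_loc_adjoinRelation hP.notMem ev hG hevG _ (hloc.1 hz)

theorem HasSmallPresentations.of_adjoin_simple_eq_top (hv : IsImmediateOver V K v)
    (hL : HasSmallPresentations V (v.comap (algebraMap L M))) (htop : L⟮x⟯ = ⊤) :
    HasSmallPresentations V v := by
  by_cases hx : IsAlgebraic L x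
  · rcases lt_or_ge (minpoly L x).natDegree 2 with hdeg | hdeg
    · have hx' : x ∈ (⊥ : IntermediateField L M) := by
        rw [mem_bot, ← RingHom.coe_range]
        exact minpoly.natDegree_eq_one_iff.mp <| le_antisymm (Nat.le_of_lt_succ hdeg) <|
          minpoly.natDegree_pos hx.isIntegral
      have hsurj : Function.Surjective (algebraMap L M) := fun z ↦ by
        rw [← Set.mem_range, ← mem_bot, ← adjoin_simple_eq_bot_iff.mpr hx', htop]
        exact mem_top
      exact .of_bijective (f := IsScalarTower.toAlgHom V L M) ⟨(algebraMap L M).injective, hsurj⟩ hL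
    · exact .of_two_le_natDegree_minpoly hv hL hx.isIntegral hdeg htop
  · exact .of_transcendental hv hL hx htop

end SimpleExtensions

section FieldTowers

open IntermediateField ResidualPresentation

variable {V K M Γ₀ : Type*} [CommRing V] [IsDomain V] [ValuationRing V] [Field K] [Algebra V K]
  [IsFractionRing V K] [Field M] [Algebra V M] [Algebra K M] [IsScalarTower V K M]
  [LinearOrderedCommGroupWithZero Γ₀] {v : Valuation M Γ₀}

theorem HasSmallPresentations.bot (hv : IsImmediateOver V K v) :
    HasSmallPresentations V (v.comap (algebraMap (⊥ : IntermediateField K M) M)) := by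
  have : IsScalarTower V (⊥ : IntermediateField K M) M := .of_algebraMap_eq fun _ ↦ rfl
  have hinj : Function.Injective (algebraMap V (⊥ : IntermediateField K M)) := by
    refine .of_comp (f := algebraMap (⊥ : IntermediateField K M) M) ?_
    rw [← RingHom.coe_comp, ← IsScalarTower.algebraMap_eq, IsScalarTower.algebraMap_eq V K M]
    exact (algebraMap K M).injective.comp (IsFractionRing.injective V K)
  refine fun E hE ↦ ⟨trivial hinj, fun i ↦ i.elim, fun z hz ↦ ?_⟩
  obtain ⟨c, hc⟩ := mem_bot.mp z.2
  obtain ⟨a, rfl⟩ := hv.exists_algebraMap_eq (c := c) (hc ▸ hE z hz)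
  convert Subalgebra.algebraMap_mem (trivial hinj).loc a
  exact Subtype.ext (hc.symm.trans (IsScalarTower.algebraMap_apply V K M a).symm)

theorem HasSmallPresentations.adjoin_simple (hv : IsImmediateOver V K v) {L : Type*} [Field L]
    [Algebra V L] [Algebra K L] [Algebra L M] [IsScalarTower V K L] [IsScalarTower K L M]
    [IsScalarTower V L M] (hL : HasSmallPresentations V (v.comap (algebraMap L M))) (x : M) :
    HasSmallPresentations V (v.comap (algebraMap L⟮x⟯ M)) := by
  have : IsScalarTower V K L⟮x⟯ := .of_algebraMap_eq fun a ↦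
    Subtype.ext (IsScalarTower.algebraMap_apply V K M a)
  have : IsScalarTower K L⟮x⟯ M := .of_algebraMap_eq fun _ ↦ rfl
  have htop : L⟮AdjoinSimple.gen L x⟯ = ⊤ :=
    lift_injective _ (by rw [lift_adjoin_simple, lift_top]; rfl)
  exact .of_adjoin_simple_eq_top (hv.comap (IsScalarTower.toAlgHom K L⟮x⟯ M)) hL htop

theorem HasSmallPresentations.adjoin_finset (hv : IsImmediateOver V K v) (S : Finset M) :
    HasSmallPresentations V (v.comap (algebraMap (adjoin K (S : Set M)) M)) := by
  refine induction_on_adjoin_finset S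
    (fun L ↦ HasSmallPresentations V (v.comap (algebraMap L M))) (.bot hv) fun L x _ hL ↦ ?_
  have : IsScalarTower V L M := .of_algebraMap_eq fun _ ↦ rfl
  exact .adjoin_simple hv hL x

theorem IsImmediateOver.hasSmallPresentations (hv : IsImmediateOver V K v) :
    HasSmallPresentations V v := by
  classical
  intro E hE
  let F := adjoin K (E : Set M)
  have : IsScalarTower V F M := .of_algebraMap_eq fun _ ↦ rfl
  obtain ⟨P, hP, hPE⟩ := HasSmallPresentations.adjoin_finset hv E
    (E.attach.image fun x : E ↦ (⟨x, subset_adjoin K _ x.2⟩ : F))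
    (Finset.forall_mem_image.mpr fun x _ ↦ hE x x.2)
  refine ⟨P.map (IsScalarTower.toAlgHom V F M) (algebraMap F M).injective, hP, fun x hx ↦ ?_⟩
  exact map_mem_loc (IsScalarTower.toAlgHom V F M) id (fun _ ↦ rfl)
    (hPE ⟨x, subset_adjoin K _ hx⟩ (by simpa using hx))

end FieldTowers

section ImmediateExtensions

theorem integers_valuation (V K : Type*) [CommRing V] [IsDomain V] [ValuationRing V] [Field K]
    [Algebra V K] [IsFractionRing V K] : (ValuationRing.valuation V K).Integers V where
  hom_inj := IsFractionRing.injective V K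
  map_le_one a := (ValuationRing.mem_integer_iff V K _).mpr ⟨a, rfl⟩
  exists_of_le_one x := (ValuationRing.mem_integer_iff V K x).mp

theorem map_algebraMap_lt_one_iff_of_integers {V K Γ₀ : Type*} [CommRing V] [IsLocalRing V]
    [Field K] [Algebra V K] [LinearOrderedCommGroupWithZero Γ₀] {v : Valuation K Γ₀}
    (hv : v.Integers V) (a : V) : v (algebraMap V K a) < 1 ↔ a ∈ maximalIdeal V := by
  rw [mem_maximalIdeal, mem_nonunits_iff, hv.isUnit_iff_valuation_eq_one, lt_iff_le_and_ne]
  exact and_iff_right (hv.map_le_one a)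

namespace IsImmediateExtension

variable {V V' : Type*} [CommRing V] [CommRing V'] [Algebra V V']

section IsLocalRing

variable {K K' Γ₀ : Type*} [IsLocalRing V] [IsLocalRing V'] [Field K] [Algebra V K] [Field K']
  [Algebra V' K'] [Algebra V K'] [Algebra K K'] [IsScalarTower V K K'] [IsScalarTower V V' K']
  [LinearOrderedCommGroupWithZero Γ₀] {v : Valuation K' Γ₀}

theorem exists_map_algebraMap_eq (himm : IsImmediateExtension V V') (hv : v.Integers V') {x : V'}
    (hx : x ≠ 0) : ∃ c : K, v (algebraMap K K' c) = v (algebraMap V' K' x) := by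
  obtain ⟨hinj, -, -, hval⟩ := himm
  obtain ⟨a, b, -, hb, u, hu⟩ := hval x hx
  have hb0 : v (algebraMap V' K' (algebraMap V V' b)) ≠ 0 := by
    rwa [v.ne_zero_iff, Ne, map_eq_zero_iff _ hv.hom_inj, map_eq_zero_iff _ hinj]
  refine ⟨algebraMap V K a / algebraMap V K b, ?_⟩
  rw [map_div₀, map_div₀, ← IsScalarTower.algebraMap_apply, ← IsScalarTower.algebraMap_apply,
    IsScalarTower.algebraMap_apply V V' K', IsScalarTower.algebraMap_apply V V' K',
    div_eq_iff hb0, ← map_mul, ← map_mul, ← hu, map_mul, map_mul, hv.valuation_unit, mul_one]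

theorem isImmediateOver (himm : IsImmediateExtension V V') (hv : v.Integers V') :
    IsImmediateOver V K v where
  map_le_one a := by
    rw [IsScalarTower.algebraMap_apply V V' K']
    exact hv.map_le_one _
  isUnit_of_map_eq_one a ha := by
    rw [IsScalarTower.algebraMap_apply V V' K', ← hv.isUnit_iff_valuation_eq_one] at ha
    rwa [← notMem_maximalIdeal, ← himm.2.1, notMem_maximalIdeal]
  exists_sub_lt f hf := by
    obtain ⟨x, rfl⟩ := hv.exists_of_le_one hf
    obtain ⟨a, ha⟩ := himm.2.2.1 x
    refine ⟨a, ?_⟩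
    rwa [IsScalarTower.algebraMap_apply V V' K', ← map_sub,
      map_algebraMap_lt_one_iff_of_integers hv]
  exists_map_eq f hf := by
    have hf0 : f ≠ 0 := v.ne_zero_iff.mp hf
    rcases hv.eq_algebraMap_or_inv_eq_algebraMap f with ⟨x, rfl | hx⟩
    · exact himm.exists_map_algebraMap_eq hv (by rintro rfl; simp at hf0)
    · obtain ⟨c, hc⟩ := himm.exists_map_algebraMap_eq (K := K) hv (x := x)
        (by rintro rfl; simp [hf0] at hx)
      exact ⟨c⁻¹, by rw [map_inv₀, map_inv₀, hc, ← hx, map_inv₀, inv_inv]⟩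

end IsLocalRing

theorem exists_subalgebra_isCompleteIntersectionOfFiniteType [IsDomain V] [ValuationRing V]
    [IsDomain V'] [ValuationRing V'] (himm : IsImmediateExtension V V') (E : Finset V') :
    ∃ B : Subalgebra V V', Algebra.IsCompleteIntersectionOfFiniteType V B ∧ ∀ x ∈ E, x ∈ B := by
  classical
  let K := FractionRing V
  let K' := FractionRing V'
  have hinj : Function.Injective (algebraMap V K') := by
    rw [IsScalarTower.algebraMap_eq V V' K', RingHom.coe_comp]
    exact (IsFractionRing.injective V' K').comp himm.1
  let _ : Algebra K K' := (IsFractionRing.lift hinj).toAlgebra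
  have : IsScalarTower V K K' := .of_algebraMap_eq fun a ↦
    (IsFractionRing.lift_algebraMap hinj a).symm
  have hv := integers_valuation V' K'
  obtain ⟨P, hP, hPE⟩ := (himm.isImmediateOver (K := K) hv).hasSmallPresentations
    (E.image (algebraMap V' K')) (by simpa using fun x _ ↦ hv.map_le_one x)
  choose ψ hψ using fun i ↦ hv.exists_of_le_one (hP i).le
  refine (P.comap (IsScalarTower.toAlgHom V V' K') hv.hom_inj ψ hψ)
    |>.exists_subalgebra_isCompleteIntersectionOfFiniteType (fun i ↦ ?_) fun x hx ↦
      P.mem_loc_comap _ _ ψ hψ (hPE _ (Finset.mem_image_of_mem _ hx))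
  exact (map_algebraMap_lt_one_iff_of_integers hv _).mp ((hψ i).symm ▸ hP i)

end IsImmediateExtension

theorem finiteType_of_isCompleteIntersectionOfFiniteType {R A : Type*} [CommRing R] [CommRing A]
    [Algebra R A] (h : Algebra.IsCompleteIntersectionOfFiniteType R A) :
    Algebra.FiniteType R A := by
  obtain ⟨N, r, f, -, ⟨e⟩⟩ := h
  exact .equiv inferInstance e

end ImmediateExtensions

/-- Let `V ⊆ V'` be an immediate extension of valuation rings.  Then `V'` is a filtered
union of its `V`-subalgebras which are complete intersection `V`-algebras of finite
type. -/
theorem immediate_extension_filtered_union_complete_intersection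
    (V V' : Type u) [CommRing V] [IsDomain V] [ValuationRing V]
    [CommRing V'] [IsDomain V'] [ValuationRing V'] [Algebra V V']
    (himm : IsImmediateExtension V V') :
    Subalgebra.IsFilteredUnion (fun B : Subalgebra V V' =>
      Algebra.IsCompleteIntersectionOfFiniteType V B) := by
  classical
  refine ⟨?_, ?_, fun s ↦ ?_⟩
  · obtain ⟨B, hB, -⟩ := himm.exists_subalgebra_isCompleteIntersectionOfFiniteType ∅
    exact ⟨B, hB⟩
  · intro A hA B hB
    obtain ⟨S, rfl⟩ := A.fg_iff_finiteType.mpr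
      (finiteType_of_isCompleteIntersectionOfFiniteType hA)
    obtain ⟨T, rfl⟩ := B.fg_iff_finiteType.mpr
      (finiteType_of_isCompleteIntersectionOfFiniteType hB)
    obtain ⟨C, hC, hST⟩ := himm.exists_subalgebra_isCompleteIntersectionOfFiniteType (S ∪ T)
    exact ⟨C, hC, Algebra.adjoin_le fun x hx ↦ hST x (Finset.mem_union_left _ hx),
      Algebra.adjoin_le fun x hx ↦ hST x (Finset.mem_union_right _ hx)⟩
  · obtain ⟨B, hB, hs⟩ := himm.exists_subalgebra_isCompleteIntersectionOfFiniteType {s}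
    exact ⟨B, hB, hs s (Finset.mem_singleton_self s)⟩
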